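/- arXiv:1206.1531 — 2 statements merged into one kernel-verified Lean document; each statement's English description precedes it below -/
import Mathlib

section
/- Let ℓ be a fixed nonnegative integer. If K_n ≥ 2 for all sufficiently large n, P_n = Ω(n), K_n/P_n = o(1), and the sequence β_{ℓ,n} := n·p_e − ln n − ℓ·ln ln n satisfies β_{ℓ,n} = o(ln n) and lim_{n→∞} β_{ℓ,n} = +∞, then the vertex connectivity κ of 𝔾_on(n,K_n,P_n,p_n) satisfies P[κ = ℓ] → 0 as n → ∞. -/
open MeasureTheory Filter Asymptotics
open scoped ENNReal

noncomputable section

/-- Key rings: `K`-element subsets of a key pool of size `P`. -/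
abbrev KeyRing (P K : ℕ) : Type := {s : Finset (Fin P) // s.card = K}

instance (P K : ℕ) : MeasurableSpace (KeyRing P K) := ⊤

/-- The uniform probability measure on key rings. -/
def uniformKeyMeasure (P K : ℕ) : Measure (KeyRing P K) :=
  (Fintype.card (KeyRing P K) : ℝ≥0∞)⁻¹ • (Measure.count : Measure (KeyRing P K))

/-- The Bernoulli measure with parameter `p` on `Bool`. -/
def bern (p : ℝ) : Measure Bool :=
  ENNReal.ofReal p • Measure.dirac true + ENNReal.ofReal (1 - p) • Measure.dirac false

/-- Sample space underlying `𝔾_on(n, K, P, p)`: independent key rings for the `n`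
nodes together with independent on/off channel states for each pair of nodes. -/
abbrev GonSpace (n K P : ℕ) : Type :=
  (Fin n → KeyRing P K) × (Sym2 (Fin n) → Bool)

/-- The probability measure of the model `𝔾_on(n, K, P, p)`: the key rings of the
`n` nodes are independent and uniform, and the channels are independent
Bernoulli(`p`) variables, independent of the key rings. -/
def gonMeasure (n K P : ℕ) (p : ℝ) : Measure (GonSpace n K P) :=
  (Measure.pi fun _ : Fin n => uniformKeyMeasure P K).prod
    (Measure.pi fun _ : Sym2 (Fin n) => bern p)

/-- The random graph `𝔾_on`: an edge is present iff the key rings intersect and the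
channel between the two nodes is on. -/
def gonGraph {n K P : ℕ} (ω : GonSpace n K P) : SimpleGraph (Fin n) where
  Adj i j := i ≠ j ∧ ((ω.1 i).1 ∩ (ω.1 j).1).Nonempty ∧ ω.2 s(i, j) = true
  symm := by
    constructor
    rintro i j ⟨h1, h2, h3⟩
    exact ⟨h1.symm, by rwa [Finset.inter_comm], by rwa [Sym2.eq_swap]⟩
  loopless := ⟨fun i h => h.1 rfl⟩

/-- The random key graph `G(n, K, P)`: an edge is present iff the key rings intersect. -/
def rkgGraph {n K P : ℕ} (ω : Fin n → KeyRing P K) : SimpleGraph (Fin n) where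
  Adj i j := i ≠ j ∧ ((ω i).1 ∩ (ω j).1).Nonempty
  symm := by
    constructor
    rintro i j ⟨h1, h2⟩
    exact ⟨h1.symm, by rwa [Finset.inter_comm]⟩
  loopless := ⟨fun i h => h.1 rfl⟩

/-- The probability measure of the random key graph model. -/
def rkgMeasure (n K P : ℕ) : Measure (Fin n → KeyRing P K) :=
  Measure.pi fun _ : Fin n => uniformKeyMeasure P K

/-- Degree of a vertex. -/
def gDeg {V : Type*} (G : SimpleGraph V) (v : V) : ℕ := Nat.card {w // G.Adj v w}

/-- Minimum vertex degree. -/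
def minDeg {V : Type*} (G : SimpleGraph V) : ℕ := sInf (Set.range (gDeg G))

/-- A graph is `k`-connected if it remains connected after the removal of any
`k - 1` of its vertices. -/
def KConnected {V : Type*} (G : SimpleGraph V) (k : ℕ) : Prop :=
  ∀ S : Finset V, S.card ≤ k - 1 → (G.induce ((S : Set V)ᶜ)).Connected

/-- Vertex connectivity: the least number of vertices whose deletion disconnects
the graph. -/
def vertexConn {V : Type*} (G : SimpleGraph V) : ℕ :=
  sInf {m | ∃ S : Finset V, S.card = m ∧ ¬ (G.induce ((S : Set V)ᶜ)).Connected}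

/-- `p_s`: the probability that two key rings share at least one key. -/
def psf (K P : ℕ) : ℝ :=
  if 2 * K ≤ P then 1 - (Nat.choose (P - K) K : ℝ) / (Nat.choose P K : ℝ) else 1

/-- `p_e = p · p_s`: the probability of an edge in `𝔾_on`. -/
def pef (K P : ℕ) (p : ℝ) : ℝ := p * psf K P

/-- The event `D_{x,ℓ}` that the node with index `x` has degree exactly `ℓ`. -/
def degEvent (n K P : ℕ) (x ℓ : ℕ) : Set (GonSpace n K P) :=
  {ω | ∃ hx : x < n, gDeg (gonGraph ω) ⟨x, hx⟩ = ℓ}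

/-- The event `E_{xy}` that the edge between the nodes with indices `x`, `y` is present. -/
def edgeEvent (n K P : ℕ) (x y : ℕ) : Set (GonSpace n K P) :=
  {ω | ∃ (hx : x < n) (hy : y < n), (gonGraph ω).Adj ⟨x, hx⟩ ⟨y, hy⟩}

/-- The event that the key rings of nodes `x` and `y` share exactly `u` keys. -/
def interCardEvent (n K P : ℕ) (x y u : ℕ) : Set (GonSpace n K P) :=
  {ω | ∃ (hx : x < n) (hy : y < n), ((ω.1 ⟨x, hx⟩).1 ∩ (ω.1 ⟨y, hy⟩).1).card = u}

/-- The event `K_{xy}` that the key rings of nodes `x` and `y` share at least one key. -/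
def keyShareEvent (n K P : ℕ) (x y : ℕ) : Set (GonSpace n K P) :=
  {ω | ∃ (hx : x < n) (hy : y < n), ((ω.1 ⟨x, hx⟩).1 ∩ (ω.1 ⟨y, hy⟩).1).Nonempty}

/-- `r_n = min(⌊P/K⌋, ⌊n/2⌋)`. -/
def rn (n K P : ℕ) : ℕ := min (P / K) (n / 2)

/-- The threshold array `J`. -/
def Jarr (n K P : ℕ) (ε lam mu : ℝ) (i : ℕ) : ℕ :=
  if i ≤ rn n K P then max ⌊(1 + ε) * (K : ℝ)⌋₊ ⌊lam * (K : ℝ) * (i : ℝ)⌋₊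
  else ⌊mu * (P : ℝ)⌋₊

/-- The event `𝓔(J)`: some set `T` of at least two nodes has a union of key rings of
size at most `J_{|T|}`. -/
def EJ (n K P : ℕ) (ε lam mu : ℝ) : Set (GonSpace n K P) :=
  {ω | ∃ T : Finset (Fin n), 2 ≤ T.card ∧
    (T.biUnion fun i => (ω.1 i).1).card ≤ Jarr n K P ε lam mu T.card}

section ProductExpectation

variable {ι α : Type*} [Fintype ι] [DecidableEq ι] [Fintype α]

/-- Expectation of `F` when the coordinates are independent with common weight function `w`. -/
def prodEx (w : α → ℝ) (F : (ι → α) → ℝ) : ℝ :=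
  ∑ k : ι → α, (∏ i, w (k i)) * F k

lemma prodEx_mono {w : α → ℝ} (hw : ∀ x, 0 ≤ w x) {F G : (ι → α) → ℝ} (h : ∀ k, F k ≤ G k) :
    prodEx w F ≤ prodEx w G :=
  Finset.sum_le_sum fun k _ =>
    mul_le_mul_of_nonneg_left (h k) (Finset.prod_nonneg fun i _ => hw (k i))

lemma prodEx_const_mul (w : α → ℝ) (a : ℝ) (F : (ι → α) → ℝ) :
    prodEx w (fun k => a * F k) = a * prodEx w F := by
  simp only [prodEx, Finset.mul_sum]
  exact Finset.sum_congr rfl fun k _ => by ring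

lemma prodEx_add (w : α → ℝ) (F G : (ι → α) → ℝ) :
    prodEx w (fun k => F k + G k) = prodEx w F + prodEx w G := by
  simp only [prodEx, mul_add, Finset.sum_add_distrib]

lemma prodEx_sum {γ : Type*} (w : α → ℝ) (s : Finset γ) (F : γ → (ι → α) → ℝ) :
    prodEx w (fun k => ∑ j ∈ s, F j k) = ∑ j ∈ s, prodEx w (F j) := by
  simp only [prodEx, Finset.mul_sum]
  exact Finset.sum_comm

lemma prodEx_one {w : α → ℝ} (hw1 : ∑ x, w x = 1) :
    prodEx w (fun _ : ι → α => (1 : ℝ)) = 1 := by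
  have h := Finset.prod_univ_sum (fun _ : ι => (Finset.univ : Finset α)) (fun _ x => w x)
  simp only [hw1, Finset.prod_const_one, Fintype.piFinset_univ] at h
  simp only [prodEx, mul_one]
  exact h.symm

/-- Resampling one coordinate does not change the expectation. -/
lemma prodEx_resample {w : α → ℝ} (hw1 : ∑ x, w x = 1) (F : (ι → α) → ℝ) (i : ι) :
    prodEx w F = prodEx w (fun k => ∑ x, w x * F (Function.update k i x)) := by
  have hprod : ∀ (k : ι → α) (x : α),
      (∏ j, w (Function.update k i x j)) * w (k i) = (∏ j, w (k j)) * w x := by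
    intro k x
    have h1 : ∀ j, w (Function.update k i x j) = Function.update (fun j => w (k j)) i (w x) j := by
      intro j
      by_cases hj : j = i
      · subst hj; simp
      · simp [hj]
    simp only [h1]
    rw [Finset.prod_update_of_mem (Finset.mem_univ i),
      ← Finset.mul_prod_erase Finset.univ (fun j => w (k j)) (Finset.mem_univ i),
      Finset.sdiff_singleton_eq_erase]
    ring
  let e : (ι → α) × α → (ι → α) × α := fun q => (Function.update q.1 i q.2, q.1 i)
  have he : Function.Involutive e := by
    rintro ⟨k, x⟩
    simp [e]
  calc prodEx w F = ∑ q : (ι → α) × α, (∏ j, w (q.1 j)) * w q.2 * F q.1 := by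
        rw [Fintype.sum_prod_type, prodEx]
        refine Finset.sum_congr rfl fun k _ => ?_
        simp only [mul_right_comm _ _ (F k), ← Finset.mul_sum, hw1, mul_one]
    _ = ∑ q : (ι → α) × α, (∏ j, w ((e q).1 j)) * w (e q).2 * F (e q).1 :=
        (Equiv.sum_comp he.toPerm
          (fun q : (ι → α) × α => (∏ j, w (q.1 j)) * w q.2 * F q.1)).symm
    _ = _ := by
        rw [Fintype.sum_prod_type, prodEx]
        refine Finset.sum_congr rfl fun k _ => ?_
        rw [Finset.mul_sum]
        refine Finset.sum_congr rfl fun x _ => ?_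
        simp only [e, hprod, mul_assoc]

/-- A factor whose conditional expectation given the other coordinates is at most `B`
can be replaced by `B`. -/
lemma prodEx_mul_le {w : α → ℝ} (hw : ∀ x, 0 ≤ w x) (hw1 : ∑ x, w x = 1)
    {F G : (ι → α) → ℝ} (i : ι) {B : ℝ}
    (hF : ∀ k x, F (Function.update k i x) = F k)
    (hG : ∀ k, F k * ∑ x, w x * G (Function.update k i x) ≤ F k * B) :
    prodEx w (fun k => F k * G k) ≤ prodEx w F * B := by
  rw [prodEx_resample hw1 _ i, mul_comm, ← prodEx_const_mul]
  refine prodEx_mono hw fun k => ?_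
  simp only [hF]
  calc ∑ x, w x * (F k * G (Function.update k i x))
      = F k * ∑ x, w x * G (Function.update k i x) := by
        rw [Finset.mul_sum]; exact Finset.sum_congr rfl fun x _ => by ring
    _ ≤ F k * B := hG k
    _ = B * F k := mul_comm _ _

/-- A factor depending on one coordinate only is independent of the other coordinates. -/
lemma prodEx_mul_coord {w : α → ℝ} (hw1 : ∑ x, w x = 1)
    {F : (ι → α) → ℝ} (i : ι) (g : α → ℝ)
    (hF : ∀ k x, F (Function.update k i x) = F k) :
    prodEx w (fun k => F k * g (k i)) = prodEx w F * ∑ x, w x * g x := by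
  rw [prodEx_resample hw1 _ i, mul_comm, ← prodEx_const_mul]
  congr 1
  funext k
  simp only [hF, Function.update_self]
  rw [Finset.sum_mul]
  exact Finset.sum_congr rfl fun x _ => by ring

/-- Factors depending on distinct single coordinates are independent of each other and of the
remaining coordinates. -/
lemma prodEx_mul_prod_coord {γ : Type*} {w : α → ℝ} (hw1 : ∑ x, w x = 1)
    {F : (ι → α) → ℝ} (J : Finset γ) (e : γ → ι) (he : Set.InjOn e J) (g : γ → α → ℝ)
    (hF : ∀ j ∈ J, ∀ k x, F (Function.update k (e j) x) = F k) :
    prodEx w (fun k => F k * ∏ j ∈ J, g j (k (e j))) =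
      prodEx w F * ∏ j ∈ J, ∑ x, w x * g j x := by
  classical
  induction J using Finset.induction_on with
  | empty => simp
  | insert a J ha ih =>
    have ih' := ih (he.mono (by simp)) (fun j hj => hF j (Finset.mem_insert_of_mem hj))
    have key := prodEx_mul_coord hw1 (F := fun k => F k * ∏ j ∈ J, g j (k (e j))) (e a) (g a)
      (by
        intro k x
        rw [hF a (Finset.mem_insert_self a J)]
        congr 1
        refine Finset.prod_congr rfl fun j hj => ?_
        rw [Function.update_of_ne]
        intro h
        have := he (Finset.mem_coe.2 (Finset.mem_insert_of_mem hj))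
          (Finset.mem_coe.2 (Finset.mem_insert_self a J)) h
        exact ha (this ▸ hj))
    rw [ih'] at key
    rw [Finset.prod_insert ha]
    calc _ = prodEx w (fun k => (F k * ∏ j ∈ J, g j (k (e j))) * g a (k (e a))) := by
          congr 1; funext k; rw [Finset.prod_insert ha]; ring
      _ = _ := by rw [key]; ring

end ProductExpectation

section Hypergeometric

/-- The probability that a uniform `K`-subset of a `P`-set avoids a fixed set of size `a`. -/
def missProb (K P a : ℕ) : ℝ := (Nat.choose (P - a) K : ℝ) / (Nat.choose P K : ℝ)

/-- The uniform weight on key rings. -/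
def ringWeight (P K : ℕ) : KeyRing P K → ℝ := fun _ => ((Nat.choose P K : ℕ) : ℝ)⁻¹

lemma card_keyRing (P K : ℕ) : Fintype.card (KeyRing P K) = Nat.choose P K := by
  rw [Fintype.card_finset_len, Fintype.card_fin]

lemma ringWeight_nonneg (P K : ℕ) (x : KeyRing P K) : 0 ≤ ringWeight P K x := by
  unfold ringWeight; positivity

lemma sum_ringWeight {P K : ℕ} (h : K ≤ P) : ∑ x, ringWeight P K x = 1 := by
  have : (0 : ℝ) < Nat.choose P K := by exact_mod_cast Nat.choose_pos h
  simp only [ringWeight, Finset.sum_const, Finset.card_univ, card_keyRing, nsmul_eq_mul]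
  field_simp

lemma sum_ringWeight_subset (P K : ℕ) (D : Finset (Fin P)) :
    ∑ x, ringWeight P K x * (if x.1 ⊆ D then (1 : ℝ) else 0) =
      (Nat.choose D.card K : ℝ) / (Nat.choose P K : ℝ) := by
  have hcard : (Finset.univ.filter fun x : KeyRing P K => x.1 ⊆ D).card = Nat.choose D.card K := by
    rw [← Finset.card_powersetCard]
    refine Finset.card_bij (fun x _ => x.1) ?_ ?_ ?_
    · intro x hx
      simp only [Finset.mem_filter, Finset.mem_univ, true_and] at hx
      exact Finset.mem_powersetCard.2 ⟨hx, x.2⟩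
    · intro x _ y _ h
      exact Subtype.ext h
    · intro y hy
      rw [Finset.mem_powersetCard] at hy
      exact ⟨⟨y, hy.2⟩, by simp [hy.1], rfl⟩
  simp only [ringWeight, ← Finset.mul_sum, Finset.sum_boole, hcard]
  rw [div_eq_inv_mul]

lemma sum_ringWeight_disjoint (P K : ℕ) (D : Finset (Fin P)) :
    ∑ x, ringWeight P K x * (if Disjoint x.1 D then (1 : ℝ) else 0) = missProb K P D.card := by
  have h := sum_ringWeight_subset P K Dᶜ
  rw [Finset.card_compl, Fintype.card_fin] at h
  rw [missProb, ← h]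
  refine Finset.sum_congr rfl fun x _ => ?_
  simp only [Finset.subset_compl_iff_disjoint_right]

lemma choose_mul_choose_succ_le {N M : ℕ} (K : ℕ) (h : N ≤ M) :
    N.choose K * (M + 1).choose K ≤ (N + 1).choose K * M.choose K := by
  rcases Nat.lt_or_ge N K with hK | hK
  · simp [Nat.choose_eq_zero_of_lt hK]
  · obtain ⟨a, rfl⟩ := Nat.exists_eq_add_of_le hK
    obtain ⟨b, rfl⟩ := Nat.exists_eq_add_of_le h
    have e1 : (K + a + 1) * (K + a).choose K = (K + a + 1).choose K * (a + 1) := by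
      have := Nat.choose_mul_succ_eq (K + a) K
      rw [show K + a + 1 - K = a + 1 by omega] at this
      linarith
    have e2 : (K + a + b + 1) * (K + a + b).choose K = (K + a + b + 1).choose K * (a + b + 1) := by
      have := Nat.choose_mul_succ_eq (K + a + b) K
      rw [show K + a + b + 1 - K = a + b + 1 by omega] at this
      linarith
    set A := (K + a).choose K
    set B := (K + a + b).choose K
    set A' := (K + a + 1).choose K
    set B' := (K + a + b + 1).choose K
    have hpos : 0 < (a + 1) * (a + b + 1) := by positivity
    refine Nat.le_of_mul_le_mul_left ?_ hpos
    calc (a + 1) * (a + b + 1) * (A * B') = (a + 1) * A * (B' * (a + b + 1)) := by ring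
      _ = (a + 1) * A * ((K + a + b + 1) * B) := by rw [e2]
      _ = A * B * ((a + 1) * (K + a + b + 1)) := by ring
      _ ≤ A * B * ((K + a + 1) * (a + b + 1)) := by
          refine Nat.mul_le_mul_left _ ?_
          nlinarith [Nat.zero_le (K * b)]
      _ = ((K + a + 1) * A) * (a + b + 1) * B := by ring
      _ = (A' * (a + 1)) * (a + b + 1) * B := by rw [e1]
      _ = _ := by ring

lemma choose_mul_choose_add_le (K : ℕ) : ∀ a N b : ℕ,
    N.choose K * (N + a + b).choose K ≤ (N + a).choose K * (N + b).choose K := by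
  intro a
  induction a with
  | zero => intro N b; simp
  | succ a ih =>
    intro N b
    cases b with
    | zero => simp [mul_comm]
    | succ b =>
      calc N.choose K * (N + (a + 1) + (b + 1)).choose K
          = N.choose K * (N + a + b + 1 + 1).choose K := by congr 2; ring
        _ ≤ (N + 1).choose K * (N + a + b + 1).choose K :=
            choose_mul_choose_succ_le K (by omega)
        _ = (N + 1).choose K * (N + 1 + a + b).choose K := by congr 2; ring
        _ ≤ _ := by
            have := ih (N + 1) b
            rwa [show N + 1 + a = N + (a + 1) by ring, show N + 1 + b = N + (b + 1) by ring] at *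

lemma missProb_nonneg (K P a : ℕ) : 0 ≤ missProb K P a := by unfold missProb; positivity

lemma missProb_zero {K P : ℕ} (h : K ≤ P) : missProb K P 0 = 1 := by
  have : (0 : ℝ) < Nat.choose P K := by exact_mod_cast Nat.choose_pos h
  simp [missProb, this.ne']

lemma missProb_le_one {K P : ℕ} (h : K ≤ P) (a : ℕ) : missProb K P a ≤ 1 := by
  have : (0 : ℝ) < Nat.choose P K := by exact_mod_cast Nat.choose_pos h
  rw [missProb, div_le_one this]
  exact_mod_cast Nat.choose_le_choose K (Nat.sub_le P a)

/-- Avoiding two disjoint sets is negatively correlated. -/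
lemma missProb_add_le {K P a b : ℕ} (h : K ≤ P) (hab : a + b ≤ P) :
    missProb K P (a + b) ≤ missProb K P a * missProb K P b := by
  have hpos : (0 : ℝ) < Nat.choose P K := by exact_mod_cast Nat.choose_pos h
  have := choose_mul_choose_add_le K a (P - (a + b)) b
  rw [show P - (a + b) + a + b = P by omega, show P - (a + b) + a = P - b by omega,
    show P - (a + b) + b = P - a by omega] at this
  have h' : ((P - (a + b)).choose K : ℝ) * P.choose K ≤ (P - b).choose K * (P - a).choose K := by
    exact_mod_cast this
  rw [missProb, missProb, missProb, div_mul_div_comm, div_le_div_iff₀ hpos (by positivity)]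
  nlinarith

lemma missProb_convex {K P : ℕ} (h : K ≤ P) (t : ℕ) :
    missProb K P (t + 1) - missProb K P (t + 2) ≤ missProb K P t - missProb K P (t + 1) := by
  have hpos : (0 : ℝ) < Nat.choose P K := by exact_mod_cast Nat.choose_pos h
  have key : 2 * (P - (t + 1)).choose K ≤ (P - t).choose K + (P - (t + 2)).choose K := by
    rcases Nat.lt_or_ge P (t + 2) with hP | hP
    · rcases Nat.lt_or_ge P (t + 1) with hP' | hP'
      · rw [show P - (t + 1) = 0 by omega, show P - t = 0 by omega, show P - (t + 2) = 0 by omega]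
        omega
      · rw [show P - (t + 1) = 0 by omega, show P - t = 1 by omega, show P - (t + 2) = 0 by omega]
        have := Nat.choose_le_choose K (Nat.zero_le 1)
        omega
    · obtain ⟨N, hN⟩ := Nat.exists_eq_add_of_le hP
      rw [show P - (t + 1) = N + 1 by omega, show P - t = N + 2 by omega,
        show P - (t + 2) = N by omega]
      cases K with
      | zero => simp
      | succ K =>
        have h1 := Nat.choose_succ_succ (N + 1) K
        have h2 := Nat.choose_succ_succ N K
        have h3 := Nat.choose_le_choose K (Nat.le_succ N)
        simp only [Nat.succ_eq_add_one] at *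
        rw [show N + 2 = N + 1 + 1 by ring]
        omega
  have key' : (2 : ℝ) * (P - (t + 1)).choose K ≤ (P - t).choose K + (P - (t + 2)).choose K := by
    exact_mod_cast key
  simp only [missProb, ← sub_div]
  exact div_le_div_of_nonneg_right (by linarith) hpos.le

/-- For `a ≤ b`, the hitting probability per element is larger for the smaller set. -/
lemma mul_one_sub_missProb_le {K P a b : ℕ} (h : K ≤ P) (hab : a ≤ b) :
    (a : ℝ) * (1 - missProb K P b) ≤ b * (1 - missProb K P a) := by
  have step : ∀ t : ℕ, (t : ℝ) * (missProb K P t - missProb K P (t + 1)) ≤ 1 - missProb K P t := by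
    intro t
    induction t with
    | zero => simp [missProb_zero h]
    | succ t ih =>
      have := missProb_convex h t
      push_cast
      have h2 : ((t : ℝ) + 1) * (missProb K P (t + 1) - missProb K P (t + 2)) ≤
          ((t : ℝ) + 1) * (missProb K P t - missProb K P (t + 1)) :=
        mul_le_mul_of_nonneg_left this (by positivity)
      calc _ ≤ _ := h2
        _ ≤ _ := by linarith
  induction b, hab using Nat.le_induction with
  | base => exact le_rfl
  | succ b hb ih =>
    rcases Nat.eq_zero_or_pos b with hb0 | hb0
    · have : a = 0 := by omega
      subst this
      simp [missProb_zero h]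
    · have hbpos : (0 : ℝ) < b := by exact_mod_cast hb0
      have hs := step b
      have h1 : (b : ℝ) * (1 - missProb K P (b + 1)) ≤ (b + 1) * (1 - missProb K P b) := by linarith
      push_cast
      refine le_of_mul_le_mul_left ?_ hbpos
      calc (b : ℝ) * (a * (1 - missProb K P (b + 1)))
          = a * (b * (1 - missProb K P (b + 1))) := by ring
        _ ≤ a * ((b + 1) * (1 - missProb K P b)) := by gcongr
        _ = (b + 1) * (a * (1 - missProb K P b)) := by ring
        _ ≤ (b + 1) * (b * (1 - missProb K P a)) := by gcongr
        _ = _ := by ring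

lemma missProb_one {K P : ℕ} (h : K ≤ P) (hP : 0 < P) : missProb K P 1 = 1 - (K : ℝ) / P := by
  have hpos : (0 : ℝ) < Nat.choose P K := by exact_mod_cast Nat.choose_pos h
  have hPpos : (0 : ℝ) < P := by exact_mod_cast hP
  obtain ⟨N, rfl⟩ : ∃ N, P = N + 1 := ⟨P - 1, by omega⟩
  have e := Nat.choose_mul_succ_eq N K
  have e' : (N.choose K : ℝ) * (N + 1) = (N + 1).choose K * ((N + 1 : ℝ) - K) := by
    have : ((N + 1 - K : ℕ) : ℝ) = (N + 1 : ℝ) - K := by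
      rw [Nat.cast_sub h]; push_cast; ring
    rw [← this]
    exact_mod_cast e
  simp only [missProb, Nat.add_sub_cancel]
  push_cast at *
  field_simp
  linarith

lemma missProb_le_exp {K P a : ℕ} (h : K ≤ P) (hP : 0 < P) (ha : a ≤ P) :
    missProb K P a ≤ Real.exp (-(a * K / P)) := by
  induction a with
  | zero => simp [missProb_zero h]
  | succ a ih =>
    have h1 : missProb K P 1 ≤ Real.exp (-(K / P)) := by
      rw [missProb_one h hP]
      have := Real.add_one_le_exp (-((K : ℝ) / P))
      linarith
    calc missProb K P (a + 1) ≤ missProb K P a * missProb K P 1 := missProb_add_le h ha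
      _ ≤ Real.exp (-(a * K / P)) * Real.exp (-(K / P)) :=
          mul_le_mul (ih (by omega)) h1 (missProb_nonneg _ _ _) (Real.exp_pos _).le
      _ = _ := by rw [← Real.exp_add]; congr 1; push_cast; ring

lemma psf_eq {K P : ℕ} (h : K ≤ P) : psf K P = 1 - missProb K P K := by
  unfold psf missProb
  split_ifs with h2
  · rfl
  · rw [Nat.choose_eq_zero_of_lt (by omega)]; simp

lemma psf_nonneg {K P : ℕ} (h : K ≤ P) : 0 ≤ psf K P := by
  rw [psf_eq h]; linarith [missProb_le_one h K]

lemma psf_le_one {K P : ℕ} (h : K ≤ P) : psf K P ≤ 1 := by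
  rw [psf_eq h]; linarith [missProb_nonneg K P K]

lemma psf_le {K P : ℕ} (h : K ≤ P) (hK : 1 ≤ K) : psf K P ≤ (K : ℝ) ^ 2 / P := by
  have := mul_one_sub_missProb_le (a := 1) h hK
  rw [missProb_one h (by omega)] at this
  rw [psf_eq h]
  push_cast at this
  calc _ ≤ _ := by simpa using this
    _ = _ := by ring

lemma one_sub_exp_ge {x : ℝ} (hx : 0 ≤ x) : min x 1 / 2 ≤ 1 - Real.exp (-x) := by
  have h1 : Real.exp (-x) ≤ Real.exp (-(min x 1)) := by
    apply Real.exp_le_exp.2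
    linarith [min_le_left x 1]
  set y := min x 1 with hy
  have hy0 : 0 ≤ y := le_min hx zero_le_one
  have hy1 : y ≤ 1 := min_le_right _ _
  have h2 : Real.exp (-y) * (1 + y) ≤ 1 := by
    have := Real.add_one_le_exp y
    calc Real.exp (-y) * (1 + y) ≤ Real.exp (-y) * Real.exp y := by gcongr; linarith
      _ = 1 := by rw [← Real.exp_add]; simp
  nlinarith [Real.exp_pos (-y)]

lemma le_psf {K P : ℕ} (h : K ≤ P) (hP : 0 < P) : min ((K : ℝ) ^ 2 / P) 1 / 2 ≤ psf K P := by
  have h1 := missProb_le_exp h hP h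
  have h2 := one_sub_exp_ge (x := (K : ℝ) * K / P) (by positivity)
  rw [psf_eq h, sq]
  linarith

end Hypergeometric

section HitCount

variable {ι : Type*} [DecidableEq ι] {P K : ℕ}

/-- The number of indices in `T` whose key ring meets the ring `x`. -/
def hitCount (k : ι → KeyRing P K) (T : Finset ι) (x : KeyRing P K) : ℕ :=
  (T.filter fun i => (x.1 ∩ (k i).1).Nonempty).card

/-- The set of keys held by the members of `T`. -/
def keyUnion (k : ι → KeyRing P K) (T : Finset ι) : Finset (Fin P) :=
  T.biUnion fun i => (k i).1

lemma pow_hitCount {ι : Type*}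
    (k : ι → KeyRing P K) (T : Finset ι) (x : KeyRing P K) (a : ℝ) :
    a ^ hitCount k T x = ∏ i ∈ T, (if (x.1 ∩ (k i).1).Nonempty then a else 1) := by
  rw [hitCount, Finset.prod_ite]; simp

lemma sum_miss_mul_pow_hitCount_le (h : K ≤ P) (hK : 1 ≤ K) {p : ℝ} (hp0 : 0 ≤ p) (hp1 : p ≤ 1)
    (k : ι → KeyRing P K) (T : Finset ι) : ∀ D : Finset (Fin P),
    ∑ x, ringWeight P K x * ((if Disjoint x.1 D then (1 : ℝ) else 0) * (1 - p) ^ hitCount k T x) ≤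
      missProb K P D.card *
        Real.exp (-(p * psf K P * (((D ∪ keyUnion k T).card : ℝ) - D.card) / K)) := by
  have hKpos : (0 : ℝ) < K := by exact_mod_cast hK
  induction T using Finset.induction_on with
  | empty =>
    intro D
    simp only [hitCount, keyUnion, Finset.filter_empty, Finset.card_empty, pow_zero, mul_one,
      Finset.biUnion_empty, Finset.union_empty, sub_self, mul_zero, zero_div, neg_zero,
      Real.exp_zero]
    exact (sum_ringWeight_disjoint P K D).le
  | insert i T hi ih =>
    intro D
    set A : Finset (Fin P) := (k i).1 \ (D ∪ keyUnion k T) with hA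
    have hAD : Disjoint D A := by
      rw [hA]; exact (Finset.disjoint_sdiff).mono_left Finset.subset_union_left
    have hAU : Disjoint (D ∪ keyUnion k T) A := by rw [hA]; exact Finset.disjoint_sdiff
    have hcardDA : (D ∪ A).card = D.card + A.card := Finset.card_union_of_disjoint hAD
    have hins : D ∪ keyUnion k (insert i T) = (D ∪ keyUnion k T) ∪ A := by
      rw [hA, Finset.union_sdiff_self_eq_union, keyUnion, keyUnion, Finset.biUnion_insert]
      ext z; simp only [Finset.mem_union]; tauto
    have hcardins : (D ∪ keyUnion k (insert i T)).card = (D ∪ keyUnion k T).card + A.card := by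
      rw [hins]; exact Finset.card_union_of_disjoint hAU
    have hDAU : (D ∪ A ∪ keyUnion k T).card = (D ∪ keyUnion k T).card + A.card := by
      rw [← Finset.card_union_of_disjoint hAU]
      congr 1
      ext z; simp only [Finset.mem_union]; tauto
    have hAK : A.card ≤ K := (Finset.card_le_card Finset.sdiff_subset).trans (k i).2.le
    set E : ℝ := Real.exp (-(p * psf K P * (((D ∪ keyUnion k T).card : ℝ) - D.card) / K)) with hE
    have h1 := ih D
    have h2 := ih (D ∪ A)
    rw [hDAU, hcardDA, show (((D ∪ keyUnion k T).card + A.card : ℕ) : ℝ) -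
      ((D.card + A.card : ℕ) : ℝ) = ((D ∪ keyUnion k T).card : ℝ) - D.card by push_cast; ring,
      ← hE] at h2
    rw [← hE] at h1
    have hterm : ∀ x : KeyRing P K,
        ringWeight P K x * ((if Disjoint x.1 D then (1 : ℝ) else 0) *
          (1 - p) ^ hitCount k (insert i T) x) ≤
        (1 - p) * (ringWeight P K x * ((if Disjoint x.1 D then (1 : ℝ) else 0) *
          (1 - p) ^ hitCount k T x)) +
        p * (ringWeight P K x * ((if Disjoint x.1 (D ∪ A) then (1 : ℝ) else 0) *
          (1 - p) ^ hitCount k T x)) := by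
      intro x
      have hw := ringWeight_nonneg P K x
      have hq : 0 ≤ (1 - p) ^ hitCount k T x := pow_nonneg (by linarith) _
      rw [pow_hitCount, Finset.prod_insert hi, ← pow_hitCount]
      set Q := (1 - p) ^ hitCount k T x
      set W := ringWeight P K x
      have hWQ : 0 ≤ W * Q := mul_nonneg hw hq
      by_cases hD : Disjoint x.1 D
      · by_cases hx : (x.1 ∩ (k i).1).Nonempty
        · rw [if_pos hD, if_pos hx]
          have : 0 ≤ p * (W * ((if Disjoint x.1 (D ∪ A) then (1 : ℝ) else 0) * Q)) := by
            split_ifs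
            · rw [one_mul]; positivity
            · simp
          linarith
        · have hxA : Disjoint x.1 (D ∪ A) := by
            rw [Finset.disjoint_union_right]
            refine ⟨hD, ?_⟩
            rw [Finset.not_nonempty_iff_eq_empty, ← Finset.disjoint_iff_inter_eq_empty] at hx
            exact hx.mono_right Finset.sdiff_subset
          rw [if_pos hD, if_neg hx, if_pos hxA]
          linarith
      · have hxA : ¬ Disjoint x.1 (D ∪ A) := by
          rw [Finset.disjoint_union_right]; tauto
        simp [hD, hxA]
    have hm := missProb_add_le (a := D.card) (b := A.card) h (by
      rw [← hcardDA]; simpa using Finset.card_le_univ (D ∪ A))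
    have hslope := mul_one_sub_missProb_le h hAK
    rw [← psf_eq h] at hslope
    have hm0 := missProb_nonneg K P D.card
    have hmA : missProb K P A.card ≤ 1 - A.card * psf K P / K := by
      rw [le_sub_comm, div_le_iff₀ hKpos]; linarith
    have hEpos : 0 < E := Real.exp_pos _
    have hexp : 1 - p * psf K P * A.card / K ≤ Real.exp (-(p * psf K P * A.card / K)) := by
      have := Real.add_one_le_exp (-(p * psf K P * A.card / K)); linarith
    calc _ ≤ ∑ x, ((1 - p) * (ringWeight P K x * ((if Disjoint x.1 D then (1 : ℝ) else 0) *
          (1 - p) ^ hitCount k T x)) +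
        p * (ringWeight P K x * ((if Disjoint x.1 (D ∪ A) then (1 : ℝ) else 0) *
          (1 - p) ^ hitCount k T x))) := Finset.sum_le_sum fun x _ => hterm x
      _ ≤ (1 - p) * (missProb K P D.card * E) + p * (missProb K P (D.card + A.card) * E) := by
          rw [Finset.sum_add_distrib, ← Finset.mul_sum, ← Finset.mul_sum]
          exact add_le_add (mul_le_mul_of_nonneg_left h1 (by linarith))
            (mul_le_mul_of_nonneg_left h2 hp0)
      _ ≤ (1 - p) * (missProb K P D.card * E) +
            p * (missProb K P D.card * (1 - A.card * psf K P / K) * E) := by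
          gcongr
          exact hm.trans (mul_le_mul_of_nonneg_left hmA hm0)
      _ = missProb K P D.card * E * (1 - p * psf K P * A.card / K) := by ring
      _ ≤ missProb K P D.card * E * Real.exp (-(p * psf K P * A.card / K)) := by gcongr
      _ = _ := by
          rw [mul_assoc, hE, ← Real.exp_add, hcardins]
          congr 2
          push_cast
          ring

/-- A large key union makes it unlikely that a fresh vertex has no active link to `T`. -/
lemma sum_pow_hitCount_le (h : K ≤ P) (hK : 1 ≤ K) {p : ℝ} (hp0 : 0 ≤ p) (hp1 : p ≤ 1)
    (k : ι → KeyRing P K) (T : Finset ι) :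
    ∑ x, ringWeight P K x * (1 - p) ^ hitCount k T x ≤
      Real.exp (-(p * psf K P * (keyUnion k T).card / K)) := by
  have := sum_miss_mul_pow_hitCount_le h hK hp0 hp1 k T ∅
  simpa [missProb_zero h] using this

lemma hitCount_mono {ι : Type*}
    (k : ι → KeyRing P K) {S T : Finset ι} (h : S ⊆ T) (x : KeyRing P K) :
    hitCount k S x ≤ hitCount k T x :=
  Finset.card_le_card (Finset.filter_subset_filter _ h)

/-- Bound for large `T` in terms of the key unions of its subsets of size `s`, by the
arithmetic-geometric mean inequality over `g` disjoint subsets. -/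
lemma sum_pow_hitCount_le_of_subsets (h : K ≤ P) (hK : 1 ≤ K) {p : ℝ} (hp0 : 0 ≤ p) (hp1 : p ≤ 1)
    (k : ι → KeyRing P K) (T : Finset ι) {g s : ℕ} (hg : 1 ≤ g) (hgs : g * s ≤ T.card) {u : ℝ}
    (hu : ∀ W ⊆ T, W.card = s → u ≤ (keyUnion k W).card) :
    ∑ x, ringWeight P K x * (1 - p) ^ hitCount k T x ≤
      Real.exp (-((1 - (1 - p) ^ g) * psf K P * u / K)) := by
  have hgpos : (0 : ℝ) < g := by exact_mod_cast hg
  have hKpos : (0 : ℝ) < K := by exact_mod_cast hK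
  have hq0 : 0 ≤ 1 - p := by linarith
  obtain ⟨e⟩ : Nonempty ((Fin g × Fin s) ↪ T) := by
    rw [Function.Embedding.nonempty_iff_card_le]
    simpa using hgs
  let W : Fin g → Finset ι := fun j => Finset.univ.image fun i : Fin s => (e (j, i) : ι)
  have hWT : ∀ j, W j ⊆ T := by
    intro j z hz
    simp only [W, Finset.mem_image, Finset.mem_univ, true_and] at hz
    obtain ⟨i, rfl⟩ := hz
    exact (e (j, i)).2
  have hWcard : ∀ j, (W j).card = s := by
    intro j
    rw [Finset.card_image_of_injective _ (fun a b hab => by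
      have := e.injective (Subtype.ext hab)
      simpa using this)]
    simp
  have hdisj : ∀ i ∈ (Finset.univ : Finset (Fin g)), ∀ j ∈ (Finset.univ : Finset (Fin g)),
      i ≠ j → Disjoint (W i) (W j) := by
    intro i _ j _ hij
    rw [Finset.disjoint_left]
    intro z hz hz'
    simp only [W, Finset.mem_image, Finset.mem_univ, true_and] at hz hz'
    obtain ⟨a, rfl⟩ := hz
    obtain ⟨b, hb⟩ := hz'
    have := e.injective (Subtype.ext hb)
    simp only [Prod.mk.injEq] at this
    exact hij this.1.symm
  have hcount : ∀ x, ∑ j, hitCount k (W j) x ≤ hitCount k T x := by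
    intro x
    have : ∑ j, hitCount k (W j) x = hitCount k (Finset.univ.biUnion W) x := by
      rw [hitCount, Finset.filter_biUnion, Finset.card_biUnion]
      · rfl
      · intro i hi j hj hij
        exact (hdisj i hi j hj hij).mono (Finset.filter_subset _ _) (Finset.filter_subset _ _)
    rw [this]
    exact hitCount_mono k (Finset.biUnion_subset.2 fun j _ => hWT j) x
  have hpt : ∀ x, (1 - p) ^ hitCount k T x ≤ ∑ j : Fin g, ((g : ℝ))⁻¹ *
      (1 - (1 - (1 - p) ^ g)) ^ hitCount k (W j) x := by
    intro x
    have hamgm := Real.geom_mean_le_arith_mean_weighted (Finset.univ : Finset (Fin g))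
      (fun _ => (g : ℝ)⁻¹) (fun j => ((1 - p) ^ hitCount k (W j) x) ^ g)
      (fun _ _ => by positivity) (by simp [hgpos.ne']) (fun j _ => by positivity)
    simp only [Real.pow_rpow_inv_natCast (pow_nonneg hq0 _) (Nat.one_le_iff_ne_zero.1 hg)] at hamgm
    rw [Finset.prod_pow_eq_pow_sum] at hamgm
    refine (pow_le_pow_of_le_one hq0 (by linarith) (hcount x)).trans (hamgm.trans_eq ?_)
    refine Finset.sum_congr rfl fun j _ => ?_
    rw [sub_sub_cancel, ← pow_mul, ← pow_mul, mul_comm g]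
  have hp'0 : 0 ≤ 1 - (1 - p) ^ g := by
    linarith [pow_le_one₀ (n := g) hq0 (by linarith : 1 - p ≤ 1)]
  have hp'1 : 1 - (1 - p) ^ g ≤ 1 := by linarith [pow_nonneg hq0 g]
  have hps := psf_nonneg h
  calc ∑ x, ringWeight P K x * (1 - p) ^ hitCount k T x
      ≤ ∑ x, ringWeight P K x * ∑ j : Fin g, ((g : ℝ))⁻¹ *
          (1 - (1 - (1 - p) ^ g)) ^ hitCount k (W j) x :=
        Finset.sum_le_sum fun x _ => mul_le_mul_of_nonneg_left (hpt x) (ringWeight_nonneg P K x)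
    _ = ∑ j : Fin g, ((g : ℝ))⁻¹ * ∑ x, ringWeight P K x *
          (1 - (1 - (1 - p) ^ g)) ^ hitCount k (W j) x := by
        simp only [Finset.mul_sum]
        rw [Finset.sum_comm]
        exact Finset.sum_congr rfl fun j _ => Finset.sum_congr rfl fun x _ => by ring
    _ ≤ ∑ j : Fin g, ((g : ℝ))⁻¹ * Real.exp (-((1 - (1 - p) ^ g) * psf K P * u / K)) := by
        refine Finset.sum_le_sum fun j _ => mul_le_mul_of_nonneg_left ?_ (by positivity)
        refine (sum_pow_hitCount_le h hK hp'0 hp'1 k (W j)).trans ?_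
        apply Real.exp_le_exp.2
        have := hu (W j) (hWT j) (hWcard j)
        gcongr
    _ = _ := by simp [hgpos.ne']

end HitCount

section TreeBound

variable {ι : Type*} [Fintype ι] [DecidableEq ι] {P K : ℕ}

/-- The Bernoulli weight on `Bool`. -/
def boolWeight (p : ℝ) : Bool → ℝ := fun b => if b = true then p else 1 - p

lemma boolWeight_nonneg {p : ℝ} (hp0 : 0 ≤ p) (hp1 : p ≤ 1) (b : Bool) : 0 ≤ boolWeight p b := by
  unfold boolWeight; split_ifs <;> linarith

lemma sum_boolWeight (p : ℝ) : ∑ b, boolWeight p b = 1 := by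
  simp [boolWeight]

/-- The vertices outside `T` that are linked to some vertex of `T`. -/
def outerNbrs (k : ι → KeyRing P K) (c : Sym2 ι → Bool) (T : Finset ι) : Finset ι :=
  Tᶜ.filter fun u => ∃ i ∈ T, ((k u).1 ∩ (k i).1).Nonempty ∧ c s(u, i) = true

lemma ite_exists_eq {ι : Type*}
    (k : ι → KeyRing P K) (c : Sym2 ι → Bool) (T : Finset ι) (θ : ℝ) (u : ι) :
    (if ∃ i ∈ T, ((k u).1 ∩ (k i).1).Nonempty ∧ c s(u, i) = true then θ else 1) =
      θ + (1 - θ) * ∏ i ∈ T,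
        (if ((k u).1 ∩ (k i).1).Nonempty ∧ c s(u, i) = true then (0 : ℝ) else 1) := by
  split_ifs with h
  · obtain ⟨i, hi, h⟩ := h
    rw [Finset.prod_eq_zero hi (by simp [h])]; ring
  · rw [Finset.prod_eq_one]
    · ring
    · intro i hi
      rw [if_neg]
      exact fun hmeet => h ⟨i, hi, hmeet⟩

/-- Averaging over the channels: a family of distinct links inside `T` is active, and the
outer neighbours of `T` are penalised by `θ`. -/
lemma prodEx_channels {p : ℝ} (θ : ℝ) (k : ι → KeyRing P K) (T A : Finset ι) (f : ι → ι)
    (hA : A ⊆ T) (hf : ∀ v ∈ A, f v ∈ T) (hinj : Set.InjOn (fun v => s(v, f v)) A)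
    (S : Finset ι) (hS : Disjoint S T) :
    prodEx (boolWeight p) (fun c : Sym2 ι → Bool =>
      (∏ v ∈ A, if c s(v, f v) = true then (1 : ℝ) else 0) *
      ∏ u ∈ S, (if ∃ i ∈ T, ((k u).1 ∩ (k i).1).Nonempty ∧ c s(u, i) = true then θ else 1)) =
    p ^ A.card * ∏ u ∈ S, (θ + (1 - θ) * (1 - p) ^ hitCount k T (k u)) := by
  induction S using Finset.induction_on with
  | empty =>
    have := prodEx_mul_prod_coord (sum_boolWeight p) (F := fun _ => 1) A (fun v => s(v, f v)) hinj
      (fun _ b => if b = true then (1 : ℝ) else 0) (fun _ _ _ _ => rfl)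
    rw [prodEx_one (sum_boolWeight p)] at this
    simp only [Finset.prod_empty, mul_one]
    simp only [one_mul] at this
    rw [this]
    simp [boolWeight]
  | insert u S hu ih =>
    rw [Finset.disjoint_insert_left] at hS
    have ih' := ih hS.2
    set F : (Sym2 ι → Bool) → ℝ := fun c =>
      (∏ v ∈ A, if c s(v, f v) = true then (1 : ℝ) else 0) *
      ∏ u ∈ S, (if ∃ i ∈ T, ((k u).1 ∩ (k i).1).Nonempty ∧ c s(u, i) = true then θ else 1) with hF
    have hne1 : ∀ i ∈ T, ∀ v ∈ A, s(v, f v) ≠ s(u, i) := by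
      intro i hi v hv h
      rw [Sym2.eq_iff] at h
      rcases h with ⟨h, _⟩ | ⟨_, h⟩
      · exact hS.1 (h ▸ hA hv)
      · exact hS.1 (h ▸ hf v hv)
    have hne2 : ∀ i ∈ T, ∀ u' ∈ S, ∀ i' ∈ T, s(u', i') ≠ s(u, i) := by
      intro i hi u' hu' i' hi' h
      rw [Sym2.eq_iff] at h
      rcases h with ⟨h, _⟩ | ⟨_, h⟩
      · exact hu (h ▸ hu')
      · exact hS.1 (h ▸ hi')
    have hFinv : ∀ i ∈ T, ∀ c x, F (Function.update c s(u, i) x) = F c := by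
      intro i hi c x
      simp only [hF]
      congr 1
      · refine Finset.prod_congr rfl fun v hv => ?_
        rw [Function.update_of_ne (hne1 i hi v hv)]
      · refine Finset.prod_congr rfl fun u' hu' => ?_
        have : (∃ i' ∈ T, ((k u').1 ∩ (k i').1).Nonempty ∧
            Function.update c s(u, i) x s(u', i') = true) ↔
            (∃ i' ∈ T, ((k u').1 ∩ (k i').1).Nonempty ∧ c s(u', i') = true) := by
          refine exists_congr fun i' => and_congr_right fun hi' => ?_
          rw [Function.update_of_ne (hne2 i hi u' hu' i' hi')]
        simp only [this]
    have key := prodEx_mul_prod_coord (sum_boolWeight p) (F := F) T (fun i => s(u, i))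
      (by
        intro a ha b hb hab
        simp only [Sym2.eq_iff] at hab
        rcases hab with ⟨_, h⟩ | ⟨h, h'⟩
        · exact h
        · exact h'.trans h)
      (fun i b => if ((k u).1 ∩ (k i).1).Nonempty ∧ b = true then (0 : ℝ) else 1) hFinv
    have hfac : ∏ i ∈ T, ∑ b, boolWeight p b *
        (if ((k u).1 ∩ (k i).1).Nonempty ∧ b = true then (0 : ℝ) else 1) =
        (1 - p) ^ hitCount k T (k u) := by
      rw [pow_hitCount]
      refine Finset.prod_congr rfl fun i _ => ?_
      by_cases h : ((k u).1 ∩ (k i).1).Nonempty <;> simp [h, boolWeight]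
    rw [hfac] at key
    have hsplit : (fun c : Sym2 ι → Bool =>
        (∏ v ∈ A, if c s(v, f v) = true then (1 : ℝ) else 0) *
        ∏ u ∈ insert u S,
          (if ∃ i ∈ T, ((k u).1 ∩ (k i).1).Nonempty ∧ c s(u, i) = true then θ else 1)) =
        fun c => θ * F c + (1 - θ) * (F c * ∏ i ∈ T,
          (if ((k u).1 ∩ (k i).1).Nonempty ∧ c s(u, i) = true then (0 : ℝ) else 1)) := by
      funext c
      rw [Finset.prod_insert hu, ite_exists_eq k c T θ u]
      simp only [hF]
      ring
    rw [hsplit, prodEx_add, prodEx_const_mul, prodEx_const_mul, key, ih', Finset.prod_insert hu]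
    ring

lemma sum_ringWeight_meet (h : K ≤ P) (y : KeyRing P K) :
    ∑ x, ringWeight P K x * (if (x.1 ∩ y.1).Nonempty then (1 : ℝ) else 0) = psf K P := by
  have h1 := sum_ringWeight_disjoint P K y.1
  rw [show missProb K P y.1.card = missProb K P K from congrArg _ y.2] at h1
  rw [psf_eq h, ← h1, ← sum_ringWeight h, ← Finset.sum_sub_distrib]
  refine Finset.sum_congr rfl fun x _ => ?_
  by_cases hx : Disjoint x.1 y.1
  · have : ¬ (x.1 ∩ y.1).Nonempty := by
      rwa [Finset.not_nonempty_iff_eq_empty, ← Finset.disjoint_iff_inter_eq_empty]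
    simp [hx, this, sum_ringWeight h]
  · have : (x.1 ∩ y.1).Nonempty := by
      rwa [Finset.nonempty_iff_ne_empty, ne_eq, ← Finset.disjoint_iff_inter_eq_empty]
    simp [hx, this, sum_ringWeight h]

/-- Key sharing along a forest, described by parent pointers that decrease the rank `r`,
happens independently. -/
lemma prodEx_forest_le (h : K ≤ P) (A : Finset ι) (f : ι → ι) (r : ι → ℕ)
    (hr : ∀ v ∈ A, r (f v) < r v) :
    prodEx (ringWeight P K) (fun k : ι → KeyRing P K =>
      ∏ v ∈ A, if ((k v).1 ∩ (k (f v)).1).Nonempty then (1 : ℝ) else 0) ≤ psf K P ^ A.card := by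
  induction hm : A.card generalizing A with
  | zero =>
    rw [Finset.card_eq_zero] at hm
    subst hm
    simp [prodEx_one (sum_ringWeight h)]
  | succ m ih =>
    have hne : A.Nonempty := Finset.card_pos.1 (by omega)
    obtain ⟨v, hv, hmax⟩ := Finset.exists_max_image A r hne
    have ih' := ih (A.erase v) (fun w hw => hr w (Finset.mem_of_mem_erase hw))
      (by rw [Finset.card_erase_of_mem hv]; omega)
    have hfv : f v ≠ v := fun e => by have := hr v hv; rw [e] at this; exact lt_irrefl _ this
    have hle := prodEx_mul_le (ringWeight_nonneg P K) (sum_ringWeight h)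
      (F := fun k : ι → KeyRing P K =>
        ∏ w ∈ A.erase v, if ((k w).1 ∩ (k (f w)).1).Nonempty then (1 : ℝ) else 0)
      (G := fun k => if ((k v).1 ∩ (k (f v)).1).Nonempty then (1 : ℝ) else 0) v (B := psf K P)
      (by
        intro k x
        refine Finset.prod_congr rfl fun w hw => ?_
        have hwv : w ≠ v := Finset.ne_of_mem_erase hw
        have hfw : f w ≠ v := by
          intro e
          have h1 := hr w (Finset.mem_of_mem_erase hw)
          have h2 := hmax w (Finset.mem_of_mem_erase hw)
          rw [e] at h1
          omega
        rw [Function.update_of_ne hwv, Function.update_of_ne hfw])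
      (by
        intro k
        simp only [Function.update_self, Function.update_of_ne hfv]
        rw [sum_ringWeight_meet h])
    calc _ = prodEx (ringWeight P K) (fun k : ι → KeyRing P K =>
          (∏ w ∈ A.erase v, if ((k w).1 ∩ (k (f w)).1).Nonempty then (1 : ℝ) else 0) *
          (if ((k v).1 ∩ (k (f v)).1).Nonempty then (1 : ℝ) else 0)) := by
          congr 1; funext k; rw [Finset.prod_erase_mul _ _ hv]
      _ ≤ _ := hle
      _ ≤ psf K P ^ m * psf K P := mul_le_mul_of_nonneg_right ih' (psf_nonneg h)
      _ = _ := (pow_succ _ _).symm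

/-- The chance that a fresh vertex has no active link to `T` is at most `b`. -/
def FreshMissLe (p : ℝ) (b : ℝ) (k : ι → KeyRing P K) (T : Finset ι) : Prop :=
  ∑ x, ringWeight P K x * (1 - p) ^ hitCount k T x ≤ b

lemma hitCount_congr {ι : Type*}
    {k k' : ι → KeyRing P K} {T : Finset ι} (h : ∀ i ∈ T, k i = k' i)
    (x : KeyRing P K) : hitCount k T x = hitCount k' T x := by
  unfold hitCount
  congr 1
  refine Finset.filter_congr fun i hi => ?_
  rw [h i hi]

open scoped Classical in
/-- The expected `θ`-penalty of the outer neighbours. -/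
lemma prodEx_keys_le (h : K ≤ P) {p θ b : ℝ} (hp1 : p ≤ 1) (hθ0 : 0 ≤ θ)
    (hθ1 : θ ≤ 1) (hb : 0 ≤ b) (T A : Finset ι) (f : ι → ι) (r : ι → ℕ)
    (hA : A ⊆ T) (hf : ∀ v ∈ A, f v ∈ T) (hr : ∀ v ∈ A, r (f v) < r v)
    (S : Finset ι) (hS : Disjoint S T) :
    prodEx (ringWeight P K) (fun k : ι → KeyRing P K =>
      ((if FreshMissLe p b k T then (1 : ℝ) else 0) *
        ∏ v ∈ A, if ((k v).1 ∩ (k (f v)).1).Nonempty then (1 : ℝ) else 0) *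
      ∏ u ∈ S, (θ + (1 - θ) * (1 - p) ^ hitCount k T (k u))) ≤
    psf K P ^ A.card * (θ + (1 - θ) * b) ^ S.card := by
  have hB : 0 ≤ θ + (1 - θ) * b := by nlinarith
  induction S using Finset.induction_on with
  | empty =>
    simp only [Finset.prod_empty, mul_one, Finset.card_empty, pow_zero]
    refine le_trans (prodEx_mono (ringWeight_nonneg P K) fun k => ?_)
      (prodEx_forest_le h A f r hr)
    have : (0 : ℝ) ≤ ∏ v ∈ A, if ((k v).1 ∩ (k (f v)).1).Nonempty then (1 : ℝ) else 0 :=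
      Finset.prod_nonneg fun v _ => by split_ifs <;> norm_num
    split_ifs
    · rw [one_mul]
    · rw [zero_mul]; exact this
  | insert u S hu ih =>
    rw [Finset.disjoint_insert_left] at hS
    have hne : ∀ i ∈ T, i ≠ u := fun i hi e => hS.1 (e ▸ hi)
    have hupd : ∀ (k : ι → KeyRing P K) x, ∀ i ∈ T, Function.update k u x i = k i :=
      fun k x i hi => Function.update_of_ne (hne i hi) _ _
    have hgood : ∀ (k : ι → KeyRing P K) x,
        FreshMissLe p b (Function.update k u x) T ↔ FreshMissLe p b k T := by
      intro k x
      unfold FreshMissLe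
      simp only [hitCount_congr (hupd k x)]
    have hle := prodEx_mul_le (ringWeight_nonneg P K) (sum_ringWeight h)
      (F := fun k : ι → KeyRing P K => ((if FreshMissLe p b k T then (1 : ℝ) else 0) *
        ∏ v ∈ A, if ((k v).1 ∩ (k (f v)).1).Nonempty then (1 : ℝ) else 0) *
        ∏ u ∈ S, (θ + (1 - θ) * (1 - p) ^ hitCount k T (k u)))
      (G := fun k => θ + (1 - θ) * (1 - p) ^ hitCount k T (k u)) u (B := θ + (1 - θ) * b)
      (by
        intro k x
        simp only [hgood k x]
        congr 1
        · congr 1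
          refine Finset.prod_congr rfl fun v hv => ?_
          rw [hupd k x v (hA hv), hupd k x _ (hf v hv)]
        · refine Finset.prod_congr rfl fun w hw => ?_
          rw [hitCount_congr (hupd k x), Function.update_of_ne (ne_of_mem_of_not_mem hw hu)])
      (by
        intro k
        by_cases hk : FreshMissLe p b k T
        · refine mul_le_mul_of_nonneg_left ?_ ?_
          · simp only [hitCount_congr (hupd k _), Function.update_self]
            calc ∑ x, ringWeight P K x * (θ + (1 - θ) * (1 - p) ^ hitCount k T x)
                = θ * ∑ x, ringWeight P K x +
                  (1 - θ) * ∑ x, ringWeight P K x * (1 - p) ^ hitCount k T x := by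
                  rw [Finset.mul_sum, Finset.mul_sum, ← Finset.sum_add_distrib]
                  exact Finset.sum_congr rfl fun x _ => by ring
              _ ≤ θ + (1 - θ) * b := by
                  rw [sum_ringWeight h, mul_one]
                  have := mul_le_mul_of_nonneg_left hk (by linarith : 0 ≤ 1 - θ)
                  linarith
          · refine mul_nonneg (mul_nonneg (by split_ifs <;> norm_num)
              (Finset.prod_nonneg fun v _ => by split_ifs <;> norm_num))
              (Finset.prod_nonneg fun w _ => ?_)
            have := pow_nonneg (by linarith : 0 ≤ 1 - p) (hitCount k T (k w))
            nlinarith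
        · simp [hk])
    have ih' := ih hS.2
    calc _ = prodEx (ringWeight P K) (fun k : ι → KeyRing P K =>
          (((if FreshMissLe p b k T then (1 : ℝ) else 0) *
            ∏ v ∈ A, if ((k v).1 ∩ (k (f v)).1).Nonempty then (1 : ℝ) else 0) *
            ∏ u ∈ S, (θ + (1 - θ) * (1 - p) ^ hitCount k T (k u))) *
            (θ + (1 - θ) * (1 - p) ^ hitCount k T (k u))) := by
          congr 1; funext k; rw [Finset.prod_insert hu]; ring
      _ ≤ _ := hle
      _ ≤ (psf K P ^ A.card * (θ + (1 - θ) * b) ^ S.card) * (θ + (1 - θ) * b) :=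
          mul_le_mul_of_nonneg_right ih' hB
      _ = _ := by rw [Finset.card_insert_of_notMem hu, pow_succ]; ring

/-- The expectation in the on/off key graph model. -/
def gonEx (p : ℝ) (F : (ι → KeyRing P K) → (Sym2 ι → Bool) → ℝ) : ℝ :=
  prodEx (ringWeight P K) fun k => prodEx (boolWeight p) fun c => F k c

open scoped Classical in
/-- The probability that a given forest is present in `T`, that `T` is well spread, and that
`T` has at most `ℓ` outer neighbours. -/
lemma gonEx_forest_le (h : K ≤ P) {p θ b : ℝ} (hp0 : 0 ≤ p) (hp1 : p ≤ 1) (hθ0 : 0 < θ)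
    (hθ1 : θ ≤ 1) (hb : 0 ≤ b) (ℓ : ℕ) (T A : Finset ι) (f : ι → ι) (r : ι → ℕ)
    (hA : A ⊆ T) (hf : ∀ v ∈ A, f v ∈ T) (hr : ∀ v ∈ A, r (f v) < r v) :
    gonEx p (fun (k : ι → KeyRing P K) c =>
      if FreshMissLe p b k T ∧ (outerNbrs k c T).card ≤ ℓ ∧
        ∀ v ∈ A, ((k v).1 ∩ (k (f v)).1).Nonempty ∧ c s(v, f v) = true then (1 : ℝ) else 0) ≤
    pef K P p ^ A.card * (θ⁻¹ ^ ℓ * (θ + (1 - θ) * b) ^ (Fintype.card ι - T.card)) := by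
  have hinj : Set.InjOn (fun v => s(v, f v)) (A : Set ι) := by
    intro v hv w hw hvw
    simp only [Sym2.eq_iff] at hvw
    rcases hvw with ⟨h, _⟩ | ⟨h1, h2⟩
    · exact h
    · have a1 := hr v hv
      have a2 := hr w hw
      rw [h2] at a1
      rw [← h1] at a2
      omega
  have hpt : ∀ (k : ι → KeyRing P K) (c : Sym2 ι → Bool),
      (if FreshMissLe p b k T ∧ (outerNbrs k c T).card ≤ ℓ ∧
        ∀ v ∈ A, ((k v).1 ∩ (k (f v)).1).Nonempty ∧ c s(v, f v) = true then (1 : ℝ) else 0) ≤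
      (θ⁻¹ ^ ℓ * ((if FreshMissLe p b k T then (1 : ℝ) else 0) *
        ∏ v ∈ A, if ((k v).1 ∩ (k (f v)).1).Nonempty then (1 : ℝ) else 0)) *
      ((∏ v ∈ A, if c s(v, f v) = true then (1 : ℝ) else 0) *
        ∏ u ∈ Tᶜ,
          (if ∃ i ∈ T, ((k u).1 ∩ (k i).1).Nonempty ∧ c s(u, i) = true then θ else 1)) := by
    intro k c
    split_ifs with hc h2 h2
    · have e1 : ∏ v ∈ A, (if ((k v).1 ∩ (k (f v)).1).Nonempty then (1 : ℝ) else 0) = 1 :=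
        Finset.prod_eq_one fun v hv => if_pos (hc.2.2 v hv).1
      have e2 : ∏ v ∈ A, (if c s(v, f v) = true then (1 : ℝ) else 0) = 1 :=
        Finset.prod_eq_one fun v hv => if_pos (hc.2.2 v hv).2
      have e3 : ∏ u ∈ Tᶜ,
          (if ∃ i ∈ T, ((k u).1 ∩ (k i).1).Nonempty ∧ c s(u, i) = true then θ else 1) =
          θ ^ (outerNbrs k c T).card := by
        rw [Finset.prod_ite]; simp [outerNbrs]
      rw [e1, e2, e3]
      have h3 : θ ^ ℓ ≤ θ ^ (outerNbrs k c T).card := pow_le_pow_of_le_one hθ0.le hθ1 hc.2.1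
      have h4 : θ⁻¹ ^ ℓ * θ ^ ℓ = 1 := by rw [← mul_pow, inv_mul_cancel₀ hθ0.ne', one_pow]
      have h5 : 0 ≤ θ⁻¹ ^ ℓ := by positivity
      nlinarith
    · exact absurd hc.1 h2
    all_goals
      refine mul_nonneg (mul_nonneg (by positivity) (mul_nonneg (by norm_num)
        (Finset.prod_nonneg fun v _ => by split_ifs <;> norm_num)))
        (mul_nonneg (Finset.prod_nonneg fun v _ => by split_ifs <;> norm_num)
        (Finset.prod_nonneg fun v _ => by split_ifs <;> linarith))
  calc _ ≤ gonEx p (fun (k : ι → KeyRing P K) c =>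
        (θ⁻¹ ^ ℓ * ((if FreshMissLe p b k T then (1 : ℝ) else 0) *
        ∏ v ∈ A, if ((k v).1 ∩ (k (f v)).1).Nonempty then (1 : ℝ) else 0)) *
      ((∏ v ∈ A, if c s(v, f v) = true then (1 : ℝ) else 0) *
        ∏ u ∈ Tᶜ,
          (if ∃ i ∈ T, ((k u).1 ∩ (k i).1).Nonempty ∧ c s(u, i) = true then θ else 1))) :=
        prodEx_mono (ringWeight_nonneg P K) fun k =>
          prodEx_mono (boolWeight_nonneg hp0 hp1) fun c => hpt k c
    _ = (p ^ A.card * θ⁻¹ ^ ℓ) * prodEx (ringWeight P K) (fun k : ι → KeyRing P K =>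
        ((if FreshMissLe p b k T then (1 : ℝ) else 0) *
          ∏ v ∈ A, if ((k v).1 ∩ (k (f v)).1).Nonempty then (1 : ℝ) else 0) *
        ∏ u ∈ Tᶜ, (θ + (1 - θ) * (1 - p) ^ hitCount k T (k u))) := by
        unfold gonEx
        rw [← prodEx_const_mul]
        congr 1
        funext k
        rw [prodEx_const_mul,
          prodEx_channels θ k T A f hA hf hinj Tᶜ disjoint_compl_left]
        ring
    _ ≤ (p ^ A.card * θ⁻¹ ^ ℓ) * (psf K P ^ A.card * (θ + (1 - θ) * b) ^ (Tᶜ).card) :=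
        mul_le_mul_of_nonneg_left
          (prodEx_keys_le h hp1 hθ0.le hθ1 hb T A f r hA hf hr Tᶜ disjoint_compl_left)
          (by positivity)
    _ = _ := by rw [pef, mul_pow, Finset.card_compl]; ring

end TreeBound

section MeasureBridge

lemma uniformKeyMeasure_singleton {P K : ℕ} (h : K ≤ P) (x : KeyRing P K) :
    uniformKeyMeasure P K {x} = ENNReal.ofReal (ringWeight P K x) := by
  have : (0 : ℝ) < Nat.choose P K := by exact_mod_cast Nat.choose_pos h
  rw [uniformKeyMeasure, Measure.smul_apply, Measure.count_singleton, card_keyRing, ringWeight,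
    ENNReal.ofReal_inv_of_pos this, ENNReal.ofReal_natCast, smul_eq_mul, mul_one]

lemma bern_singleton (p : ℝ) (b : Bool) :
    bern p {b} = ENNReal.ofReal (boolWeight p b) := by
  cases b <;> simp [bern, boolWeight]

open scoped Classical in
lemma gonMeasure_eq {n K P : ℕ} {p : ℝ} (h : K ≤ P) (hp0 : 0 ≤ p) (hp1 : p ≤ 1)
    (A : Set (GonSpace n K P)) :
    gonMeasure n K P p A =
      ENNReal.ofReal (gonEx p fun k c => if (k, c) ∈ A then (1 : ℝ) else 0) := by
  have : IsFiniteMeasure (uniformKeyMeasure P K) := by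
    refine ⟨?_⟩
    rw [← Finset.coe_univ, ← sum_measure_singleton]
    simp only [uniformKeyMeasure_singleton h]
    exact ENNReal.sum_lt_top.2 fun _ _ => ENNReal.ofReal_lt_top
  have : IsFiniteMeasure (bern p) := by
    refine ⟨?_⟩
    rw [← Finset.coe_univ, ← sum_measure_singleton]
    simp only [bern_singleton]
    exact ENNReal.sum_lt_top.2 fun _ _ => ENNReal.ofReal_lt_top
  have hsing : ∀ (k : Fin n → KeyRing P K) (c : Sym2 (Fin n) → Bool),
      gonMeasure n K P p {(k, c)} =
        ENNReal.ofReal ((∏ i, ringWeight P K (k i)) * ∏ e, boolWeight p (c e)) := by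
    intro k c
    rw [gonMeasure, ← Set.singleton_prod_singleton, Measure.prod_prod, Measure.pi_singleton,
      Measure.pi_singleton]
    simp only [uniformKeyMeasure_singleton h, bern_singleton]
    rw [← ENNReal.ofReal_prod_of_nonneg fun i _ => ringWeight_nonneg P K (k i),
      ← ENNReal.ofReal_prod_of_nonneg fun i _ => boolWeight_nonneg hp0 hp1 (c i),
      ← ENNReal.ofReal_mul (Finset.prod_nonneg fun i _ => ringWeight_nonneg P K (k i))]
  have hA : A = ↑(Finset.univ.filter fun ω => ω ∈ A) := by ext; simp
  conv_lhs => rw [hA]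
  rw [← sum_measure_singleton, Finset.sum_filter, Fintype.sum_prod_type]
  have hnn : ∀ (k : Fin n → KeyRing P K) (c : Sym2 (Fin n) → Bool),
      0 ≤ (∏ i, ringWeight P K (k i)) * ∏ e, boolWeight p (c e) := fun k c =>
    mul_nonneg (Finset.prod_nonneg fun i _ => ringWeight_nonneg P K (k i))
      (Finset.prod_nonneg fun i _ => boolWeight_nonneg hp0 hp1 (c i))
  have hterm : ∀ (k : Fin n → KeyRing P K) (c : Sym2 (Fin n) → Bool),
      (if (k, c) ∈ A then gonMeasure n K P p {(k, c)} else 0) =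
      ENNReal.ofReal (((∏ i, ringWeight P K (k i)) * ∏ e, boolWeight p (c e)) *
        (if (k, c) ∈ A then (1 : ℝ) else 0)) := by
    intro k c
    split_ifs
    · rw [hsing, mul_one]
    · simp
  have hnn' : ∀ (k : Fin n → KeyRing P K) (c : Sym2 (Fin n) → Bool),
      0 ≤ ((∏ i, ringWeight P K (k i)) * ∏ e, boolWeight p (c e)) *
        (if (k, c) ∈ A then (1 : ℝ) else 0) := fun k c =>
    mul_nonneg (hnn k c) (by split_ifs <;> norm_num)
  simp only [hterm]
  simp only [← ENNReal.ofReal_sum_of_nonneg fun c _ => hnn' _ c]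
  rw [← ENNReal.ofReal_sum_of_nonneg fun k _ => Finset.sum_nonneg fun c _ => hnn' k c]
  congr 1
  simp only [gonEx, prodEx, Finset.mul_sum, mul_assoc]

end MeasureBridge

section SmallComponent

/-- If the connectivity is `ℓ`, some set `T` of at most half of the vertices spans a tree rooted
at `a` and has at most `ℓ` outer neighbours. -/
lemma exists_small_component {n ℓ : ℕ} (hn : ℓ < n) (G : SimpleGraph (Fin n))
    (h : vertexConn G = ℓ) :
    ∃ (T : Finset (Fin n)) (a : Fin n) (f : Fin n → Fin n) (r : Fin n → ℕ),
      a ∈ T ∧ 2 * T.card ≤ n ∧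
      (∀ v ∈ T.erase a, f v ∈ T ∧ G.Adj v (f v) ∧ r (f v) < r v) ∧
      (∀ v ∉ T.erase a, f v = v) ∧
      ∃ S : Finset (Fin n), S.card ≤ ℓ ∧ ∀ u ∉ T, ∀ i ∈ T, G.Adj u i → u ∈ S := by
  classical
  have hne : {m | ∃ S : Finset (Fin n), S.card = m ∧
      ¬ (G.induce ((S : Set (Fin n))ᶜ)).Connected}.Nonempty := by
    refine ⟨_, Finset.univ, rfl, fun hc => ?_⟩
    obtain ⟨⟨x, hx⟩⟩ := hc.nonempty
    simp at hx
  obtain ⟨S, hS, hconn⟩ := Nat.sInf_mem hne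
  rw [← vertexConn, h] at hS
  set H := G.induce ((S : Set (Fin n))ᶜ) with hH
  have hex : ∃ x, x ∉ S := by
    by_contra! hall
    have : S = Finset.univ := Finset.eq_univ_iff_forall.2 hall
    rw [this, Finset.card_univ, Fintype.card_fin] at hS
    omega
  obtain ⟨x0, hx0⟩ := hex
  have hnp : ¬ H.Preconnected := fun hp => hconn
    (haveI : Nonempty ((S : Set (Fin n))ᶜ : Set (Fin n)) := ⟨⟨x0, by simpa using hx0⟩⟩
     SimpleGraph.Connected.mk hp)
  unfold SimpleGraph.Preconnected at hnp
  push Not at hnp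
  obtain ⟨a, b, hab⟩ := hnp
  let comp : ((S : Set (Fin n))ᶜ : Set (Fin n)) → Finset (Fin n) := fun y =>
    Finset.univ.filter fun v => ∃ hv : v ∈ ((S : Set (Fin n))ᶜ : Set (Fin n)), H.Reachable ⟨v, hv⟩ y
  have hdisj : Disjoint (comp a) (comp b) := by
    rw [Finset.disjoint_left]
    intro v hva hvb
    simp only [comp, Finset.mem_filter, Finset.mem_univ, true_and] at hva hvb
    obtain ⟨h1, h2⟩ := hva
    obtain ⟨_, h3⟩ := hvb
    exact hab (h2.symm.trans h3)
  have hcard : (comp a).card + (comp b).card ≤ n := by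
    rw [← Finset.card_union_of_disjoint hdisj]
    simpa using Finset.card_le_univ (comp a ∪ comp b)
  have hy : ∃ y, 2 * (comp y).card ≤ n := by
    rcases le_total (comp a).card (comp b).card with h1 | h1
    · exact ⟨a, by omega⟩
    · exact ⟨b, by omega⟩
  obtain ⟨y, hy⟩ := hy
  have hmem : ∀ v, v ∈ comp y ↔ ∃ hv : v ∈ ((S : Set (Fin n))ᶜ : Set (Fin n)),
      H.Reachable ⟨v, hv⟩ y := by
    intro v; simp [comp]
  let r : Fin n → ℕ := fun v =>
    if hv : v ∈ ((S : Set (Fin n))ᶜ : Set (Fin n)) then H.dist ⟨v, hv⟩ y else 0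
  have hparent : ∀ v ∈ (comp y).erase y, ∃ w, w ∈ comp y ∧ G.Adj v w ∧ r w < r v := by
    intro v hv
    rw [Finset.mem_erase, hmem] at hv
    obtain ⟨hvy, hvS, hreach⟩ := hv
    obtain ⟨p, hp⟩ := hreach.exists_walk_length_eq_dist
    cases p with
    | nil => exact absurd rfl hvy
    | @cons _ w _ hadj q =>
      refine ⟨w.1, (hmem _).2 ⟨w.2, ⟨q⟩⟩, hadj, ?_⟩
      have h1 : r w.1 = H.dist w y := by simp only [r]; rw [dif_pos w.2]
      have h2 : r v = H.dist ⟨v, hvS⟩ y := by simp only [r]; rw [dif_pos hvS]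
      rw [h1, h2, ← hp, SimpleGraph.Walk.length_cons]
      exact Nat.lt_succ_of_le (SimpleGraph.dist_le q)
  choose! f hf using hparent
  refine ⟨comp y, y, fun v => if v ∈ (comp y).erase y then f v else v, r,
    (hmem _).2 ⟨y.2, SimpleGraph.Reachable.refl _⟩, hy, ?_, ?_, S, hS.le, ?_⟩
  · intro v hv
    simp only [if_pos hv]
    exact hf v hv
  · intro v hv
    simp only [if_neg hv]
  · intro u hu i hi hadj
    by_contra huS
    rw [hmem] at hi
    obtain ⟨hiS, hreach⟩ := hi
    refine hu ((hmem u).2 ⟨by simpa using huS, ?_⟩)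
    refine SimpleGraph.Reachable.trans (SimpleGraph.Adj.reachable ?_) hreach
    exact hadj

end SmallComponent

section UnionBound

variable {ι : Type*} [Fintype ι] [DecidableEq ι] {P K : ℕ}

lemma gonEx_mono {p : ℝ} (hp0 : 0 ≤ p) (hp1 : p ≤ 1)
    {F G : (ι → KeyRing P K) → (Sym2 ι → Bool) → ℝ} (h : ∀ k c, F k c ≤ G k c) :
    gonEx p F ≤ gonEx p G :=
  prodEx_mono (ringWeight_nonneg P K) fun k => prodEx_mono (boolWeight_nonneg hp0 hp1) fun c => h k c

lemma gonEx_add (p : ℝ) (F G : (ι → KeyRing P K) → (Sym2 ι → Bool) → ℝ) :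
    gonEx p (fun k c => F k c + G k c) = gonEx p F + gonEx p G := by
  simp only [gonEx, prodEx_add]

lemma gonEx_sum {γ : Type*} (p : ℝ) (s : Finset γ)
    (F : γ → (ι → KeyRing P K) → (Sym2 ι → Bool) → ℝ) :
    gonEx p (fun k c => ∑ j ∈ s, F j k c) = ∑ j ∈ s, gonEx p (F j) := by
  simp only [gonEx, prodEx_sum]

lemma gonEx_keys (p : ℝ) (F : (ι → KeyRing P K) → ℝ) :
    gonEx p (fun k (_ : Sym2 ι → Bool) => F k) = prodEx (ringWeight P K) F := by
  have : ∀ a : ℝ, prodEx (boolWeight p) (fun _ : Sym2 ι → Bool => a) = a := by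
    intro a
    have := prodEx_const_mul (ι := Sym2 ι) (boolWeight p) a (fun _ => 1)
    rwa [prodEx_one (sum_boolWeight p), mul_one] at this
  simp only [gonEx, this]

/-- The event that `T` spans a tree rooted at `a`, recorded by parent pointers `f`. -/
def SpansTree (k : ι → KeyRing P K) (c : Sym2 ι → Bool) (T : Finset ι) (a : ι) (f : ι → ι) : Prop :=
  (∃ r : ι → ℕ, ∀ v ∈ T.erase a, r (f v) < r v) ∧ (∀ v ∈ T.erase a, f v ∈ T) ∧
    (∀ v ∉ T.erase a, f v = v) ∧
    ∀ v ∈ T.erase a, ((k v).1 ∩ (k (f v)).1).Nonempty ∧ c s(v, f v) = true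

open scoped Classical in
/-- The probability that `T` is well spread, spans a tree and has at most `ℓ` outer neighbours. -/
lemma gonEx_spansTree_le (h : K ≤ P) {p θ b : ℝ} (hp0 : 0 ≤ p) (hp1 : p ≤ 1) (hθ0 : 0 < θ)
    (hθ1 : θ ≤ 1) (hb : 0 ≤ b) (ℓ : ℕ) (T : Finset ι) :
    gonEx p (fun (k : ι → KeyRing P K) c =>
      if FreshMissLe p b k T ∧ (outerNbrs k c T).card ≤ ℓ ∧
        ∃ a ∈ T, ∃ f, SpansTree k c T a f then (1 : ℝ) else 0) ≤
    min 1 ((T.card : ℝ) ^ T.card * pef K P p ^ (T.card - 1)) *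
      (θ⁻¹ ^ ℓ * (θ + (1 - θ) * b) ^ (Fintype.card ι - T.card)) := by
  have hX : 0 ≤ θ⁻¹ ^ ℓ * (θ + (1 - θ) * b) ^ (Fintype.card ι - T.card) := by
    have : 0 ≤ θ + (1 - θ) * b := by nlinarith
    positivity
  rw [min_mul_of_nonneg _ _ hX, one_mul]
  refine le_min ?_ ?_
  · have := gonEx_forest_le (K := K) (P := P) h hp0 hp1 hθ0 hθ1 hb ℓ T ∅ id (fun _ => 0) (by simp)
      (by simp) (by simp)
    simp only [Finset.card_empty, pow_zero, one_mul] at this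
    refine (gonEx_mono hp0 hp1 fun k c => ?_).trans this
    split_ifs with h1 h2 h2
    · exact le_rfl
    · exact absurd ⟨h1.1, h1.2.1, by simp⟩ h2
    · exact zero_le_one
    · exact le_rfl
  · let Fn : ι → Finset (ι → ι) := fun a =>
      Fintype.piFinset fun v => if v ∈ T.erase a then T else {v}
    have hFn : ∀ a ∈ T, (Fn a).card = T.card ^ (T.card - 1) := by
      intro a ha
      simp only [Fn, Fintype.card_piFinset]
      rw [← Finset.card_erase_of_mem ha, ← Finset.prod_const]
      rw [← Finset.prod_subset (Finset.subset_univ (T.erase a))]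
      · exact Finset.prod_congr rfl fun v hv => by rw [if_pos hv]
      · intro v _ hv; rw [if_neg hv]; simp
    have hone : ∀ a ∈ T, ∀ f, gonEx p (fun (k : ι → KeyRing P K) c =>
        if FreshMissLe p b k T ∧ (outerNbrs k c T).card ≤ ℓ ∧ SpansTree k c T a f
          then (1 : ℝ) else 0) ≤
        pef K P p ^ (T.card - 1) *
          (θ⁻¹ ^ ℓ * (θ + (1 - θ) * b) ^ (Fintype.card ι - T.card)) := by
      intro a ha f
      by_cases hf : (∃ r : ι → ℕ, ∀ v ∈ T.erase a, r (f v) < r v) ∧ (∀ v ∈ T.erase a, f v ∈ T)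
      · obtain ⟨⟨r, hr⟩, hfT⟩ := hf
        have := gonEx_forest_le (K := K) (P := P) h hp0 hp1 hθ0 hθ1 hb ℓ T (T.erase a) f r
          (Finset.erase_subset _ _) hfT hr
        rw [Finset.card_erase_of_mem ha] at this
        refine (gonEx_mono hp0 hp1 fun k c => ?_).trans this
        split_ifs with h1 h2 h2
        · exact le_rfl
        · exact absurd ⟨h1.1, h1.2.1, h1.2.2.2.2.2⟩ h2
        · exact zero_le_one
        · exact le_rfl
      · have hz : ∀ (k : ι → KeyRing P K) c, ¬ SpansTree k c T a f := fun k c hs =>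
          hf ⟨hs.1, hs.2.1⟩
        simp only [hz, and_false, if_false]
        rw [gonEx_keys p (fun _ => 0)]
        have : prodEx (ringWeight P K) (fun _ : ι → KeyRing P K => (0 : ℝ)) = 0 := by
          simp [prodEx]
        rw [this]
        have := psf_nonneg h
        unfold pef
        positivity
    calc _ ≤ gonEx p (fun (k : ι → KeyRing P K) c => ∑ a ∈ T, ∑ f ∈ Fn a,
          if FreshMissLe p b k T ∧ (outerNbrs k c T).card ≤ ℓ ∧ SpansTree k c T a f
          then (1 : ℝ) else 0) := by
          refine gonEx_mono hp0 hp1 fun k c => ?_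
          have hnn : ∀ a ∈ T, ∀ f ∈ Fn a, (0 : ℝ) ≤ if FreshMissLe p b k T ∧
              (outerNbrs k c T).card ≤ ℓ ∧ SpansTree k c T a f then (1 : ℝ) else 0 :=
            fun a _ f _ => by split_ifs <;> norm_num
          split_ifs with h1
          · obtain ⟨h2, h3, a, ha, f, hf⟩ := h1
            have hfF : f ∈ Fn a := by
              simp only [Fn, Fintype.mem_piFinset]
              intro v
              split_ifs with hv
              · exact hf.2.1 v hv
              · simp [hf.2.2.1 v hv]
            refine le_trans ?_ (Finset.single_le_sum
              (fun a ha => Finset.sum_nonneg (hnn a ha)) ha)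
            refine le_trans ?_ (Finset.single_le_sum (hnn a ha) hfF)
            rw [if_pos ⟨h2, h3, hf⟩]
          · exact Finset.sum_nonneg fun a ha => Finset.sum_nonneg (hnn a ha)
      _ = ∑ a ∈ T, ∑ f ∈ Fn a, gonEx p (fun (k : ι → KeyRing P K) c =>
          if FreshMissLe p b k T ∧ (outerNbrs k c T).card ≤ ℓ ∧ SpansTree k c T a f
          then (1 : ℝ) else 0) := by
          rw [gonEx_sum]
          exact Finset.sum_congr rfl fun a _ => gonEx_sum _ _ _
      _ ≤ ∑ a ∈ T, ∑ f ∈ Fn a, pef K P p ^ (T.card - 1) *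
          (θ⁻¹ ^ ℓ * (θ + (1 - θ) * b) ^ (Fintype.card ι - T.card)) :=
          Finset.sum_le_sum fun a ha => Finset.sum_le_sum fun f _ => hone a ha f
      _ = ∑ a ∈ T, ((T.card : ℝ) ^ (T.card - 1)) * (pef K P p ^ (T.card - 1) *
          (θ⁻¹ ^ ℓ * (θ + (1 - θ) * b) ^ (Fintype.card ι - T.card))) := by
          refine Finset.sum_congr rfl fun a ha => ?_
          rw [Finset.sum_const, hFn a ha, nsmul_eq_mul]
          push_cast
          rfl
      _ ≤ _ := by
          rw [Finset.sum_const, nsmul_eq_mul, ← mul_assoc, ← mul_assoc]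
          rcases Nat.eq_zero_or_pos T.card with h0 | h0
          · rw [h0]
            have := psf_nonneg h
            unfold pef
            simp only [Nat.cast_zero, zero_mul]
            have : 0 ≤ θ + (1 - θ) * b := by nlinarith
            positivity
          · rw [← pow_succ', Nat.sub_add_cancel h0]

open scoped Classical in
/-- Union bound for the event that the connectivity equals `ℓ`. -/
lemma gonEx_vertexConn_le {n ℓ : ℕ} (hn : ℓ < n) (h : K ≤ P) {p : ℝ} (hp0 : 0 ≤ p) (hp1 : p ≤ 1)
    (θ b : ℕ → ℝ) (hθ0 : ∀ r, 0 < θ r) (hθ1 : ∀ r, θ r ≤ 1) (hb : ∀ r, 0 ≤ b r) :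
    gonEx p (fun (k : Fin n → KeyRing P K) c =>
      if vertexConn (gonGraph (k, c)) = ℓ then (1 : ℝ) else 0) ≤
    prodEx (ringWeight P K) (fun k : Fin n → KeyRing P K =>
      if ∃ T : Finset (Fin n), 1 ≤ T.card ∧ 2 * T.card ≤ n ∧ ¬ FreshMissLe p (b T.card) k T
        then (1 : ℝ) else 0) +
    ∑ r ∈ Finset.range (n + 1), if 1 ≤ r ∧ 2 * r ≤ n then
      (n.choose r : ℝ) * (min 1 ((r : ℝ) ^ r * pef K P p ^ (r - 1)) *
        ((θ r)⁻¹ ^ ℓ * (θ r + (1 - θ r) * b r) ^ (n - r))) else 0 := by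
  let ev : Finset (Fin n) → (Fin n → KeyRing P K) → (Sym2 (Fin n) → Bool) → ℝ := fun T k c =>
    if FreshMissLe p (b T.card) k T ∧ (outerNbrs k c T).card ≤ ℓ ∧
        ∃ a ∈ T, ∃ f, SpansTree k c T a f then (1 : ℝ) else 0
  let B : ℕ → ℝ := fun r => min 1 ((r : ℝ) ^ r * pef K P p ^ (r - 1)) *
        ((θ r)⁻¹ ^ ℓ * (θ r + (1 - θ r) * b r) ^ (n - r))
  calc _ ≤ gonEx p (fun (k : Fin n → KeyRing P K) c =>
        (if ∃ T : Finset (Fin n), 1 ≤ T.card ∧ 2 * T.card ≤ n ∧ ¬ FreshMissLe p (b T.card) k T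
        then (1 : ℝ) else 0) +
        ∑ T ∈ (Finset.univ : Finset (Fin n)).powerset,
          if 1 ≤ T.card ∧ 2 * T.card ≤ n then ev T k c else 0) := by
        refine gonEx_mono hp0 hp1 fun k c => ?_
        have hev : ∀ T, 0 ≤ ev T k c := fun T => by simp only [ev]; split_ifs <;> norm_num
        have hnn : ∀ T ∈ (Finset.univ : Finset (Fin n)).powerset,
            (0 : ℝ) ≤ if 1 ≤ T.card ∧ 2 * T.card ≤ n then ev T k c else 0 := by
          intro T _; split_ifs
          · exact hev T
          · exact le_rfl
        by_cases hbad : ∃ T : Finset (Fin n), 1 ≤ T.card ∧ 2 * T.card ≤ n ∧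
            ¬ FreshMissLe p (b T.card) k T
        · rw [if_pos hbad]
          have := Finset.sum_nonneg hnn
          split_ifs <;> linarith
        · rw [if_neg hbad, zero_add]
          split_ifs with hconn
          · obtain ⟨T, a, f, r, ha, hT, hf, hf', S, hS, hSout⟩ :=
              exists_small_component hn (gonGraph (k, c)) hconn
            have hT1 : 1 ≤ T.card := Finset.card_pos.2 ⟨a, ha⟩
            refine le_trans ?_ (Finset.single_le_sum hnn
              (Finset.mem_powerset.2 (Finset.subset_univ T)))
            rw [if_pos ⟨hT1, hT⟩]
            simp only [ev]
            rw [if_pos]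
            refine ⟨?_, ?_, a, ha, f, ⟨r, fun v hv => (hf v hv).2.2⟩, fun v hv => (hf v hv).1, hf',
              fun v hv => (hf v hv).2.1.2⟩
            · by_contra hg
              exact hbad ⟨T, hT1, hT, hg⟩
            · refine (Finset.card_le_card fun u hu => ?_).trans hS
              simp only [outerNbrs, Finset.mem_filter, Finset.mem_compl] at hu
              obtain ⟨huT, i, hi, h1, h2⟩ := hu
              exact hSout u huT i hi ⟨ne_of_mem_of_not_mem hi huT |>.symm, h1, h2⟩
          · exact Finset.sum_nonneg hnn
    _ = prodEx (ringWeight P K) (fun k : Fin n → KeyRing P K =>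
          if ∃ T : Finset (Fin n), 1 ≤ T.card ∧ 2 * T.card ≤ n ∧ ¬ FreshMissLe p (b T.card) k T
          then (1 : ℝ) else 0) +
        ∑ T ∈ (Finset.univ : Finset (Fin n)).powerset,
          gonEx p (fun k c => if 1 ≤ T.card ∧ 2 * T.card ≤ n then ev T k c else 0) := by
        rw [gonEx_add, gonEx_sum, gonEx_keys]
    _ ≤ prodEx (ringWeight P K) (fun k : Fin n → KeyRing P K =>
          if ∃ T : Finset (Fin n), 1 ≤ T.card ∧ 2 * T.card ≤ n ∧ ¬ FreshMissLe p (b T.card) k T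
          then (1 : ℝ) else 0) +
        ∑ T ∈ (Finset.univ : Finset (Fin n)).powerset,
          if 1 ≤ T.card ∧ 2 * T.card ≤ n then B T.card else 0 := by
        refine add_le_add le_rfl (Finset.sum_le_sum fun T _ => ?_)
        split_ifs with hT
        · have := gonEx_spansTree_le (K := K) (P := P) h hp0 hp1 (hθ0 T.card) (hθ1 T.card)
            (hb T.card) ℓ T
          rw [Fintype.card_fin] at this
          refine le_trans (le_of_eq ?_) this
          simp only [ev]
          congr!
        · rw [gonEx_keys p (fun _ => 0)]
          simp [prodEx]
    _ = _ := by
        rw [Finset.sum_powerset_apply_card (fun r => if 1 ≤ r ∧ 2 * r ≤ n then B r else 0)]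
        rw [Finset.card_univ, Fintype.card_fin]
        congr 1
        refine Finset.sum_congr rfl fun r _ => ?_
        split_ifs
        · rw [nsmul_eq_mul]
        · simp

end UnionBound

section KeyUnion

lemma descFactorial_mul_pow_le {m P : ℕ} (h : m ≤ P) :
    ∀ K : ℕ, m.descFactorial K * P ^ K ≤ P.descFactorial K * m ^ K
  | 0 => by simp
  | K + 1 => by
    have ih := descFactorial_mul_pow_le h K
    have h1 : (m - K) * P ≤ (P - K) * m := by
      rcases le_total m K with hm | hm
      · simp [Nat.sub_eq_zero_of_le hm]
      · zify [hm, hm.trans h]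
        nlinarith [mul_le_mul_of_nonneg_left (Nat.cast_le (α := ℤ).2 h) (Nat.cast_nonneg (α := ℤ) K)]
    calc m.descFactorial (K + 1) * P ^ (K + 1)
        = ((m - K) * P) * (m.descFactorial K * P ^ K) := by
          rw [Nat.descFactorial_succ]; ring
      _ ≤ ((P - K) * m) * (P.descFactorial K * m ^ K) := Nat.mul_le_mul h1 ih
      _ = _ := by rw [Nat.descFactorial_succ]; ring

lemma choose_div_choose_le {m P : ℕ} (h : m ≤ P) (hP : 0 < P) (K : ℕ) :
    (m.choose K : ℝ) / P.choose K ≤ ((m : ℝ) / P) ^ K := by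
  rcases Nat.eq_zero_or_pos (P.choose K) with h0 | h0
  · rw [h0]; simp; positivity
  have hP' : (0 : ℝ) < P := by exact_mod_cast hP
  have h0' : (0 : ℝ) < P.choose K := by exact_mod_cast h0
  rw [div_pow, div_le_div_iff₀ h0' (by positivity)]
  have := descFactorial_mul_pow_le h K
  rw [Nat.descFactorial_eq_factorial_mul_choose, Nat.descFactorial_eq_factorial_mul_choose,
    mul_assoc, mul_assoc] at this
  have := Nat.le_of_mul_le_mul_left this (Nat.factorial_pos K)
  have h2 : (m.choose K : ℝ) * P ^ K ≤ P.choose K * m ^ K := by exact_mod_cast this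
  linarith

lemma choose_mul_pow_le_exp {n : ℕ} (hn : 0 < n) (r : ℕ) :
    (n.choose r : ℝ) * ((r : ℝ) / n) ^ r ≤ Real.exp r := by
  have hn' : (0 : ℝ) < n := by exact_mod_cast hn
  calc (n.choose r : ℝ) * ((r : ℝ) / n) ^ r ≤ ((n : ℝ) ^ r / r.factorial) * ((r : ℝ) / n) ^ r :=
        mul_le_mul_of_nonneg_right (Nat.choose_le_pow_div r n) (by positivity)
    _ = (r : ℝ) ^ r / r.factorial := by rw [div_pow]; field_simp
    _ ≤ Real.exp r := Real.pow_div_factorial_le_exp _ (Nat.cast_nonneg r) r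

variable {ι : Type*} [Fintype ι] [DecidableEq ι] {P K : ℕ}

lemma prodEx_card_keyUnion_le (h : K ≤ P) (T : Finset ι) {m : ℕ} (hm : m ≤ P) :
    prodEx (ringWeight P K) (fun k : ι → KeyRing P K =>
      if (keyUnion k T).card ≤ m then (1 : ℝ) else 0) ≤
    P.choose m * ((m.choose K : ℝ) / P.choose K) ^ T.card := by
  calc _ ≤ prodEx (ringWeight P K) (fun k : ι → KeyRing P K =>
        ∑ D ∈ (Finset.univ : Finset (Fin P)).powersetCard m,
          1 * ∏ i ∈ T, if (k i).1 ⊆ D then (1 : ℝ) else 0) := by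
        refine prodEx_mono (ringWeight_nonneg P K) fun k => ?_
        have hnn : ∀ D ∈ (Finset.univ : Finset (Fin P)).powersetCard m,
            (0 : ℝ) ≤ 1 * ∏ i ∈ T, if (k i).1 ⊆ D then (1 : ℝ) else 0 := fun D _ => by
          rw [one_mul]
          exact Finset.prod_nonneg fun i _ => by split_ifs <;> norm_num
        split_ifs with hk
        · obtain ⟨D, hD, hDm⟩ := Finset.exists_superset_card_eq hk (by simpa using hm)
          refine le_trans ?_ (Finset.single_le_sum hnn
            (Finset.mem_powersetCard.2 ⟨Finset.subset_univ D, hDm⟩))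
          rw [one_mul, Finset.prod_eq_one]
          intro i hi
          rw [if_pos]
          exact (Finset.subset_biUnion_of_mem (fun i => (k i).1) hi).trans hD
        · exact Finset.sum_nonneg hnn
    _ = ∑ D ∈ (Finset.univ : Finset (Fin P)).powersetCard m,
          ((m.choose K : ℝ) / P.choose K) ^ T.card := by
        rw [prodEx_sum]
        refine Finset.sum_congr rfl fun D hD => ?_
        refine (prodEx_mul_prod_coord (sum_ringWeight h) (F := fun _ => 1) T id
          Function.injective_id.injOn (fun _ x => if x.1 ⊆ D then (1 : ℝ) else 0)
          (fun _ _ _ _ => rfl)).trans ?_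
        rw [prodEx_one (sum_ringWeight h), one_mul, Finset.prod_const,
          sum_ringWeight_subset, (Finset.mem_powersetCard.1 hD).2]
    _ = _ := by
        rw [Finset.sum_const, Finset.card_powersetCard, Finset.card_univ, Fintype.card_fin,
          nsmul_eq_mul]

lemma sum_pow_le_two_mul {x : ℝ} (hx0 : 0 ≤ x) (hx : x ≤ 1 / 2) (N : ℕ) :
    ∑ r ∈ Finset.range N, (if 1 ≤ r then x ^ r else 0) ≤ 2 * x := by
  have : ∀ N : ℕ, ∑ r ∈ Finset.range (N + 1), (if 1 ≤ r then x ^ r else 0) ≤ 2 * x - 2 * x ^ (N + 1) := by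
    intro N
    induction N with
    | zero => simp
    | succ N ih =>
      rw [Finset.sum_range_succ, if_pos (by omega)]
      have : x ^ (N + 1 + 1) ≤ x ^ (N + 1) * (1 / 2) := by
        rw [pow_succ]; gcongr
      linarith
  rcases N with _ | N
  · simpa using hx0
  · have := this N
    have : 0 ≤ x ^ (N + 1) := by positivity
    linarith

lemma choose_mul_choose_mul_pow_le {n r : ℕ} {c : ℝ} (hc : 0 < c) (hcn : c * n ≤ P)
    (hK : 20 ≤ K) (hKc : 2 * (1 - Real.log c) ≤ K) (hr : 1 ≤ r) (hn : 0 < n) (hP : 0 < P)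
    (hrP : (r : ℝ) * K ≤ Real.exp (-60) * P) :
    (n.choose r : ℝ) * (P.choose (9 * (K * r) / 10) *
      (((9 * (K * r) / 10).choose K : ℝ) / P.choose K) ^ r) ≤ Real.exp (-(K / 2)) ^ r := by
  set m := 9 * (K * r) / 10 with hm
  have hn' : (0 : ℝ) < n := by exact_mod_cast hn
  have hP' : (0 : ℝ) < P := by exact_mod_cast hP
  have hK' : (20 : ℝ) ≤ K := by exact_mod_cast hK
  have hr' : (1 : ℝ) ≤ r := by exact_mod_cast hr
  set y : ℝ := r * K / P with hy
  have hy0 : 0 < y := by positivity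
  have hye : y ≤ Real.exp (-60) := by rwa [hy, div_le_iff₀ hP']
  have hlogy : Real.log y ≤ -60 := by
    rw [← Real.log_exp (-60)]; exact Real.log_le_log hy0 hye
  have hy1 : y ≤ 1 := hye.trans (by rw [Real.exp_le_one_iff]; norm_num)
  have hmr : 10 * m ≤ 9 * (K * r) := Nat.mul_div_le _ _
  have hmr' : (10 : ℝ) * m ≤ 9 * (K * r) := by exact_mod_cast hmr
  have hmy : (m : ℝ) / P ≤ y := by
    rw [hy]; gcongr; nlinarith
  have hmP : m ≤ P := by
    have : (m : ℝ) ≤ P := by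
      have := hmy.trans hy1
      rwa [div_le_one hP'] at this
    exact_mod_cast this
  have hkey : (P.choose m : ℝ) * ((m.choose K : ℝ) / P.choose K) ^ r ≤
      Real.exp (K * r + K * r / 10 * Real.log y) := by
    calc (P.choose m : ℝ) * ((m.choose K : ℝ) / P.choose K) ^ r
        ≤ (P.choose m : ℝ) * (((m : ℝ) / P) ^ K) ^ r := by
          gcongr; exact choose_div_choose_le hmP hP K
      _ = ((P.choose m : ℝ) * ((m : ℝ) / P) ^ m) * ((m : ℝ) / P) ^ (K * r - m) := by
          rw [mul_assoc, ← pow_add, ← pow_mul]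
          congr 2; omega
      _ ≤ Real.exp m * y ^ (K * r - m) := by
          gcongr
          exact choose_mul_pow_le_exp hP m
      _ = Real.exp (m + ((K * r - m : ℕ) : ℝ) * Real.log y) := by
          rw [Real.exp_add, ← Real.log_pow, Real.exp_log (by positivity)]
      _ ≤ _ := by
          rw [Real.exp_le_exp, Nat.cast_sub (by omega)]
          push_cast
          nlinarith
  have hchoose : (n.choose r : ℝ) ≤
      Real.exp (r * (1 + Real.log K - Real.log c - Real.log y)) := by
    have h1 := choose_mul_pow_le_exp hn r
    have hrn : c * y / K ≤ (r : ℝ) / n := by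
      rw [hy, div_le_div_iff₀ (by positivity) hn']
      field_simp
      linarith
    have h2 : (n.choose r : ℝ) * (c * y / K) ^ r ≤ Real.exp r := by
      refine le_trans ?_ h1
      gcongr
    have h3 : c * y / K = Real.exp (Real.log c + Real.log y - Real.log K) := by
      rw [Real.exp_sub, Real.exp_add, Real.exp_log hc, Real.exp_log hy0,
        Real.exp_log (by positivity)]
    rw [h3, ← Real.exp_nat_mul, ← le_div_iff₀ (Real.exp_pos _), ← Real.exp_sub] at h2
    refine h2.trans (le_of_eq ?_)
    congr 1; ring
  refine (mul_le_mul hchoose hkey (by positivity) (Real.exp_pos _).le).trans ?_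
  rw [← Real.exp_add, ← Real.exp_nat_mul, Real.exp_le_exp]
  have hlogK : Real.log K ≤ K := (Real.log_le_sub_one_of_pos (by positivity)).trans (by linarith)
  have : r * (1 + Real.log K - Real.log c - Real.log y) + (K * r + K * r / 10 * Real.log y) =
      r * (1 + Real.log K - Real.log c + K + (K / 10 - 1) * Real.log y) := by ring
  rw [this]
  have h4 : ((K : ℝ) / 10 - 1) * Real.log y ≤ -(3 * K) := by nlinarith
  gcongr
  linarith

open scoped Classical in
/-- With high probability no small set of vertices has an atypically small key union. -/
lemma prodEx_small_keyUnion_le {n : ℕ} (h : K ≤ P) {c : ℝ} (hc : 0 < c) (hcn : c * n ≤ P)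
    (hK : 20 ≤ K) (hKc : 2 * (1 - Real.log c) ≤ K) {s : ℕ} (hn : 0 < n)
    (hs : (s : ℝ) * K ≤ Real.exp (-60) * P) :
    prodEx (ringWeight P K) (fun k : Fin n → KeyRing P K =>
      if ∃ T : Finset (Fin n), 1 ≤ T.card ∧ T.card ≤ s ∧
        10 * (keyUnion k T).card < 9 * (K * T.card) then (1 : ℝ) else 0) ≤
      2 * Real.exp (-(K / 2)) := by
  have hP : 0 < P := by omega
  let B : ℕ → ℝ := fun r => if 1 ≤ r ∧ r ≤ s then (P.choose (9 * (K * r) / 10) : ℝ) *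
      (((9 * (K * r) / 10).choose K : ℝ) / P.choose K) ^ r else 0
  calc _ ≤ prodEx (ringWeight P K) (fun k : Fin n → KeyRing P K =>
        ∑ T ∈ (Finset.univ : Finset (Fin n)).powerset, if 1 ≤ T.card ∧ T.card ≤ s then
          (if (keyUnion k T).card ≤ 9 * (K * T.card) / 10 then (1 : ℝ) else 0) else 0) := by
        refine prodEx_mono (ringWeight_nonneg P K) fun k => ?_
        have hnn : ∀ T ∈ (Finset.univ : Finset (Fin n)).powerset,
            (0 : ℝ) ≤ if 1 ≤ T.card ∧ T.card ≤ s then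
          (if (keyUnion k T).card ≤ 9 * (K * T.card) / 10 then (1 : ℝ) else 0) else 0 :=
            fun T _ => by split_ifs <;> norm_num
        split_ifs with hk
        · obtain ⟨T, h1, h2, h3⟩ := hk
          refine le_trans ?_ (Finset.single_le_sum hnn
            (Finset.mem_powerset.2 (Finset.subset_univ T)))
          rw [if_pos ⟨h1, h2⟩, if_pos (by omega)]
        · exact Finset.sum_nonneg hnn
    _ ≤ ∑ T ∈ (Finset.univ : Finset (Fin n)).powerset, B T.card := by
        rw [prodEx_sum]
        refine Finset.sum_le_sum fun T _ => ?_
        simp only [B]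
        split_ifs with hT
        · refine prodEx_card_keyUnion_le h T ?_
          have h1 : ((K * T.card : ℕ) : ℝ) ≤ P := by
            push_cast
            have h2 : (T.card : ℝ) * K ≤ s * K := by gcongr; exact hT.2
            have h3 : Real.exp (-60) ≤ 1 := by rw [Real.exp_le_one_iff]; norm_num
            nlinarith [Nat.cast_nonneg (α := ℝ) P]
          have h2 : K * T.card ≤ P := by exact_mod_cast h1
          omega
        · simp [prodEx]
    _ = ∑ r ∈ Finset.range (n + 1), (n.choose r : ℝ) * B r := by
        rw [Finset.sum_powerset_apply_card B, Finset.card_univ, Fintype.card_fin]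
        simp only [nsmul_eq_mul]
    _ ≤ ∑ r ∈ Finset.range (n + 1), if 1 ≤ r then Real.exp (-(K / 2)) ^ r else 0 := by
        refine Finset.sum_le_sum fun r _ => ?_
        simp only [B]
        by_cases hr : 1 ≤ r
        · rw [if_pos hr]
          split_ifs with hrs
          · refine choose_mul_choose_mul_pow_le hc hcn hK hKc hr hn hP (le_trans ?_ hs)
            gcongr
            exact hrs.2
          · rw [mul_zero]; positivity
        · rw [if_neg hr, if_neg (fun h => hr h.1), mul_zero]
    _ ≤ _ := by
        refine sum_pow_le_two_mul (Real.exp_pos _).le ?_ _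
        have hK' : (20 : ℝ) ≤ K := by exact_mod_cast hK
        calc Real.exp (-((K : ℝ) / 2)) ≤ Real.exp (-1) := by
              rw [Real.exp_le_exp]; linarith
          _ ≤ 1 / 2 := by
              have := Real.exp_one_gt_d9
              rw [Real.exp_neg, one_div]
              exact inv_anti₀ (by norm_num) (by linarith)

end KeyUnion

section MissBound

/-- A bound for the chance that a fresh vertex has no active link to a given set of `r` vertices
whose small subsets have typical key unions; `q` is the edge probability. -/
def missBound (q : ℝ) (r : ℕ) : ℝ :=
  if r = 1 then 1 - q
  else if r < 300 then Real.exp (-(9 / 10 * r * q))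
  else Real.exp (-min (9 / 40 * r * q) 3)

lemma missBound_nonneg {q : ℝ} (hq : q ≤ 1) (r : ℕ) : 0 ≤ missBound q r := by
  unfold missBound
  split_ifs
  · linarith
  · positivity
  · positivity

variable {ι : Type*} [DecidableEq ι] {P K : ℕ}

lemma freshMissLe_singleton {ι : Type*} (h : K ≤ P) (p : ℝ) (k : ι → KeyRing P K) (i : ι) :
    FreshMissLe p (1 - pef K P p) k {i} := by
  unfold FreshMissLe pef
  have heq : ∑ x, ringWeight P K x * (1 - p) ^ hitCount k {i} x = ∑ x, ringWeight P K x -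
      p * ∑ x, ringWeight P K x * (if (x.1 ∩ (k i).1).Nonempty then (1 : ℝ) else 0) := by
    rw [Finset.mul_sum, ← Finset.sum_sub_distrib]
    refine Finset.sum_congr rfl fun x _ => ?_
    rw [pow_hitCount, Finset.prod_singleton]
    split_ifs <;> ring
  rw [heq, sum_ringWeight h, sum_ringWeight_meet h]

lemma freshMissLe_missBound (h : K ≤ P) (hK : 1 ≤ K) {p : ℝ} (hp0 : 0 ≤ p) (hp1 : p ≤ 1)
    (k : ι → KeyRing P K) {s : ℕ} (hs : 300 ≤ s) (hs3 : 3 ≤ 9 / 20 * psf K P * s)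
    (hgood : ∀ W : Finset ι, 1 ≤ W.card → W.card ≤ s →
      9 * (K * W.card) ≤ 10 * (keyUnion k W).card)
    (T : Finset ι) (hT : 1 ≤ T.card) :
    FreshMissLe p (missBound (pef K P p) T.card) k T := by
  have hKpos : (0 : ℝ) < K := by exact_mod_cast hK
  have hpsf := psf_nonneg h
  have hgood' : ∀ W : Finset ι, 1 ≤ W.card → W.card ≤ s →
      (9 / 10 * W.card : ℝ) * K ≤ (keyUnion k W).card := by
    intro W h1 h2
    have : (9 * (K * W.card) : ℝ) ≤ 10 * (keyUnion k W).card := by exact_mod_cast hgood W h1 h2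
    linarith
  by_cases h1 : T.card = 1
  · obtain ⟨i, rfl⟩ := Finset.card_eq_one.1 h1
    simpa [missBound] using freshMissLe_singleton h p k i
  have hq : 0 ≤ pef K P p * T.card := mul_nonneg (mul_nonneg hp0 hpsf) (Nat.cast_nonneg _)
  by_cases hTs : T.card ≤ s
  · have hexp : 9 / 10 * T.card * pef K P p ≤ p * psf K P * (keyUnion k T).card / K := by
      rw [le_div_iff₀ hKpos, pef]
      have := mul_le_mul_of_nonneg_left (hgood' T hT hTs) (mul_nonneg hp0 hpsf)
      linarith
    refine (sum_pow_hitCount_le h hK hp0 hp1 k T).trans ?_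
    unfold missBound
    rw [if_neg h1]
    split_ifs
    · rw [Real.exp_le_exp]; linarith
    · rw [Real.exp_le_exp, neg_le_neg_iff]
      refine (min_le_left _ _).trans (le_trans ?_ hexp)
      linarith
  · have hspos : 0 < s := by omega
    have hg : 1 ≤ T.card / s := (Nat.one_le_div_iff hspos).2 (by omega)
    set g := T.card / s with hgdef
    have hgs : g * s ≤ T.card := Nat.div_mul_le_self _ _
    have hgs' : T.card < (g + 1) * s := by
      rw [hgdef, Nat.add_mul, one_mul]
      exact Nat.lt_div_mul_add hspos
    have hTg : (T.card : ℝ) ≤ 2 * g * s := by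
      have : T.card ≤ 2 * g * s := hgs'.le.trans (Nat.mul_le_mul_right _ (by omega))
      exact_mod_cast this
    refine (sum_pow_hitCount_le_of_subsets h hK hp0 hp1 k T hg hgs (u := 9 / 10 * s * K)
      fun W _ hW => ?_).trans ?_
    · have := hgood' W (by omega) (by omega)
      rwa [hW] at this
    unfold missBound
    rw [if_neg h1, if_neg (by omega), Real.exp_le_exp, neg_le_neg_iff]
    have hpow : (1 - p) ^ g ≤ Real.exp (-(g * p)) := by
      rw [show -((g : ℝ) * p) = g * (-p) by ring, Real.exp_nat_mul]
      have h2 := Real.add_one_le_exp (-p)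
      exact pow_le_pow_left₀ (by linarith) (by linarith) g
    have hmin := one_sub_exp_ge (x := g * p) (by positivity)
    have hrw : (1 - (1 - p) ^ g) * psf K P * (9 / 10 * s * K) / K =
        (1 - (1 - p) ^ g) * (9 / 10 * psf K P * s) := by field_simp
    rw [hrw]
    have hps : 0 ≤ 9 / 10 * psf K P * s := by positivity
    refine le_trans ?_ (mul_le_mul_of_nonneg_right (show min (g * p) 1 / 2 ≤ 1 - (1 - p) ^ g by
      linarith) hps)
    rcases le_total (g * p) 1 with hgp | hgp
    · rw [min_eq_left hgp]
      refine (min_le_left _ _).trans ?_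
      have := mul_le_mul_of_nonneg_left hTg (mul_nonneg hp0 hpsf)
      rw [pef]
      linarith
    · rw [min_eq_right hgp]
      refine (min_le_right _ _).trans ?_
      linarith

end MissBound

section TermBounds

lemma one_sub_exp_neg_ge {x : ℝ} (hx : 0 ≤ x) : x / (1 + x) ≤ 1 - Real.exp (-x) := by
  have h1 := Real.add_one_le_exp x
  have h2 : Real.exp (-x) ≤ 1 / (1 + x) := by
    rw [Real.exp_neg, ← one_div]
    exact one_div_le_one_div_of_le (by linarith) (by linarith)
  have h3 : x / (1 + x) = 1 - 1 / (1 + x) := by field_simp; ring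
  linarith

/-- A mixture of `1` and `b` with weights `θ` and `1 - θ`, raised to a power. -/
lemma mix_pow_le_exp {θ b z : ℝ} (hθ0 : 0 ≤ θ) (hθ1 : θ ≤ 1) (hb : 0 ≤ b) (m : ℕ)
    (hz : z ≤ (1 - θ) * (1 - b) * m) : (θ + (1 - θ) * b) ^ m ≤ Real.exp (-z) := by
  have h0 : 0 ≤ θ + (1 - θ) * b := by nlinarith
  have h1 : θ + (1 - θ) * b ≤ Real.exp (-((1 - θ) * (1 - b))) := by
    have := Real.add_one_le_exp (-((1 - θ) * (1 - b)))
    linarith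
  calc _ ≤ Real.exp (-((1 - θ) * (1 - b))) ^ m := pow_le_pow_left₀ h0 h1 m
    _ = Real.exp (-((1 - θ) * (1 - b) * m)) := by rw [← Real.exp_nat_mul]; congr 1; ring
    _ ≤ _ := by rw [Real.exp_le_exp]; linarith

/-- The contribution of sets of size `r` to the union bound. -/
def sizeTerm (n ℓ : ℕ) (q θ b : ℝ) (r : ℕ) : ℝ :=
  (n.choose r : ℝ) * (min 1 ((r : ℝ) ^ r * q ^ (r - 1)) *
    (θ⁻¹ ^ ℓ * (θ + (1 - θ) * b) ^ (n - r)))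

lemma sizeTerm_one_le {n ℓ : ℕ} {q L : ℝ} (hL : 1 ≤ L) (hn : (n : ℝ) = Real.exp L) (hn1 : 1 ≤ n)
    (hq0 : 0 ≤ q) (hq1 : q ≤ 1) (hq2 : n * q ≤ 2 * L) :
    sizeTerm n ℓ q L⁻¹ (missBound q 1) 1 ≤ Real.exp (3 - (n * q - L - ℓ * Real.log L)) := by
  have hb : missBound q 1 = 1 - q := by simp [missBound]
  have hLpos : 0 < L := by linarith
  have hθ : L⁻¹ ≤ 1 := inv_le_one_of_one_le₀ hL
  unfold sizeTerm
  rw [hb, inv_inv, Nat.choose_one_right, hn]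
  have hmix : (L⁻¹ + (1 - L⁻¹) * (1 - q)) ^ (n - 1) ≤ Real.exp (-(n * q - 3)) := by
    refine mix_pow_le_exp (by positivity) hθ (by linarith) _ ?_
    rw [Nat.cast_sub hn1, Nat.cast_one]
    have h1 : n * q * L⁻¹ ≤ 2 := by
      rw [← div_eq_mul_inv, div_le_iff₀ hLpos]; exact hq2
    have h2 : 0 ≤ L⁻¹ * q := by positivity
    nlinarith
  have hpow : L ^ ℓ = Real.exp (ℓ * Real.log L) := by
    rw [Real.exp_nat_mul, Real.exp_log hLpos]
  have h0 : 0 ≤ (L⁻¹ + (1 - L⁻¹) * (1 - q)) ^ (n - 1) := by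
    have : 0 ≤ L⁻¹ := by positivity
    apply pow_nonneg
    nlinarith
  calc _ ≤ Real.exp L * (1 * (L ^ ℓ * Real.exp (-(n * q - 3)))) := by
        gcongr
        exact min_le_left _ _
    _ = _ := by
        rw [hpow, one_mul, ← Real.exp_add, ← Real.exp_add, hn]
        congr 1; ring

lemma pow_mul_pow_pred_le {n r : ℕ} {q L : ℝ} (hr : 1 ≤ r) (hL : 1 ≤ L)
    (hq0 : 0 ≤ q) (hq2 : n * q ≤ 2 * L) :
    (n : ℝ) ^ r * q ^ (r - 1) ≤ n * (2 * L) ^ r := by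
  obtain ⟨m, rfl⟩ : ∃ m, r = m + 1 := ⟨r - 1, by omega⟩
  rw [Nat.add_sub_cancel, pow_succ', mul_assoc, ← mul_pow]
  gcongr
  calc (n * q) ^ m ≤ (2 * L) ^ m := by gcongr
    _ ≤ (2 * L) ^ (m + 1) := pow_le_pow_right₀ (by linarith) (by omega)

lemma sizeTerm_le_of_lt {n ℓ r : ℕ} {q L : ℝ} (hL : 1 ≤ L) (hn : (n : ℝ) = Real.exp L)
    (hn3 : 3000 ≤ n) (hr2 : 2 ≤ r) (hr : r < 300)
    (hq0 : 0 ≤ q) (hq1 : L ≤ n * q) (hq2 : n * q ≤ 2 * L) (hnL : 72 * L ≤ n) :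
    sizeTerm n ℓ q 16⁻¹ (missBound q r) r ≤
      16 ^ ℓ * (300 ^ 300 * ((2 * L) ^ 300 * Real.exp (-(2 / 5 * L)))) := by
  have hb : missBound q r = Real.exp (-(9 / 10 * r * q)) := by
    rw [missBound, if_neg (by omega), if_pos hr]
  have hn3' : (3000 : ℝ) ≤ n := by exact_mod_cast hn3
  have hr2' : (2 : ℝ) ≤ r := by exact_mod_cast hr2
  have hr' : (r : ℝ) ≤ 300 := by exact_mod_cast hr.le
  have hqs : q ≤ 1 / 36 := by
    by_contra hcon
    push Not at hcon
    nlinarith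
  have hmix : (16⁻¹ + (1 - 16⁻¹) * missBound q r) ^ (n - r) ≤ Real.exp (-(7 / 5 * L)) := by
    refine mix_pow_le_exp (by norm_num) (by norm_num) (by rw [hb]; positivity) _ ?_
    rw [Nat.cast_sub (by omega), hb]
    have h1 := one_sub_exp_neg_ge (x := 9 / 5 * q) (by positivity)
    have h2 : Real.exp (-(9 / 10 * r * q)) ≤ Real.exp (-(9 / 5 * q)) := by
      rw [Real.exp_le_exp]; nlinarith
    have h3 : 95 / 100 * (9 / 5 * q) ≤ 9 / 5 * q / (1 + 9 / 5 * q) := by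
      rw [le_div_iff₀ (by positivity)]; nlinarith
    have h4 : 171 / 100 * q ≤ 1 - Real.exp (-(9 / 10 * r * q)) := by linarith
    have h5 : 9 / 10 * (n : ℝ) ≤ n - r := by linarith
    have h6 : 171 / 100 * q * (9 / 10 * n) ≤
        (1 - Real.exp (-(9 / 10 * r * q))) * ((n : ℝ) - r) :=
      mul_le_mul h4 h5 (by positivity) (by linarith [mul_nonneg (by norm_num : (0:ℝ) ≤ 171/100) hq0])
    linarith
  have hbn : 0 ≤ missBound q r := by rw [hb]; positivity
  have h0 : 0 ≤ (16⁻¹ + (1 - 16⁻¹) * missBound q r) ^ (n - r) := by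
    apply pow_nonneg; norm_num; positivity
  have hchoose : (n.choose r : ℝ) ≤ (n : ℝ) ^ r := by exact_mod_cast Nat.choose_le_pow n r
  have hrr : (r : ℝ) ^ r ≤ 300 ^ 300 := by
    calc (r : ℝ) ^ r ≤ 300 ^ r := by gcongr
      _ ≤ 300 ^ 300 := pow_le_pow_right₀ (by norm_num) hr.le
  have hLr : (2 * L) ^ r ≤ (2 * L) ^ 300 := pow_le_pow_right₀ (by linarith) hr.le
  unfold sizeTerm
  rw [inv_inv]
  calc _ ≤ (n : ℝ) ^ r * (((r : ℝ) ^ r * q ^ (r - 1)) * (16 ^ ℓ * Real.exp (-(7 / 5 * L)))) := by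
        gcongr
        exact min_le_right _ _
    _ = 16 ^ ℓ * ((r : ℝ) ^ r * (((n : ℝ) ^ r * q ^ (r - 1)) * Real.exp (-(7 / 5 * L)))) := by ring
    _ ≤ 16 ^ ℓ * (300 ^ 300 * ((n * (2 * L) ^ 300) * Real.exp (-(7 / 5 * L)))) := by
        have := (pow_mul_pow_pred_le (r := r) (by omega) hL hq0 hq2).trans
          (mul_le_mul_of_nonneg_left hLr (Nat.cast_nonneg n))
        exact mul_le_mul_of_nonneg_left (mul_le_mul hrr
          (mul_le_mul_of_nonneg_right this (Real.exp_pos _).le) (by positivity) (by positivity))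
          (by positivity)
    _ = 16 ^ ℓ * (300 ^ 300 * ((2 * L) ^ 300 * (Real.exp L * Real.exp (-(7 / 5 * L))))) := by
        rw [hn]; ring
    _ = _ := by
        rw [← Real.exp_add]
        congr 5; ring

lemma sizeTerm_le_of_ge {n ℓ r : ℕ} {q L : ℝ} (hL : 1 ≤ L) (hn : (n : ℝ) = Real.exp L)
    (hr : 300 ≤ r) (hrn : 2 * r ≤ n)
    (hq0 : 0 ≤ q) (hq1 : L ≤ n * q) (hq2 : n * q ≤ 2 * L) (hnL : 72 * L ≤ n)
    (hlog : 1 + Real.log (2 * L) ≤ L / 80) :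
    sizeTerm n ℓ q 16⁻¹ (missBound q r) r ≤ 16 ^ ℓ * Real.exp (-(2 * L)) := by
  have hb : missBound q r = Real.exp (-min (9 / 40 * r * q) 3) := by
    rw [missBound, if_neg (by omega), if_neg (by omega)]
  have hnpos : (0 : ℝ) < n := by rw [hn]; positivity
  have hr' : (300 : ℝ) ≤ r := by exact_mod_cast hr
  have hrn' : (2 * r : ℝ) ≤ n := by exact_mod_cast hrn
  have hsub : (n : ℝ) / 2 ≤ (n - r : ℕ) := by
    rw [Nat.cast_sub (by omega)]; linarith
  have hbn : 0 ≤ missBound q r := by rw [hb]; positivity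
  have h0 : 0 ≤ (16⁻¹ + (1 - 16⁻¹) * missBound q r) ^ (n - r) := by
    apply pow_nonneg; norm_num; positivity
  unfold sizeTerm
  rw [inv_inv]
  rcases le_total (9 / 40 * r * q) 3 with hx | hx
  · rw [min_eq_left hx] at hb
    have hx0 : 0 ≤ 9 / 40 * r * q := by positivity
    have hmix : (16⁻¹ + (1 - 16⁻¹) * missBound q r) ^ (n - r) ≤ Real.exp (-(r * (L / 40))) := by
      refine mix_pow_le_exp (by norm_num) (by norm_num) hbn _ ?_
      have h1 := one_sub_exp_neg_ge hx0
      have h2 : 9 / 40 * r * q / 4 ≤ 9 / 40 * r * q / (1 + 9 / 40 * r * q) := by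
        gcongr; linarith
      rw [hb]
      have h3 : 9 / 40 * r * q / 4 * (n / 2) ≤
          (1 - Real.exp (-(9 / 40 * r * q))) * (n - r : ℕ) :=
        mul_le_mul (by linarith) hsub (by positivity) (by linarith)
      have h4 := mul_le_mul_of_nonneg_left hq1 (Nat.cast_nonneg (α := ℝ) r)
      have h5 : 0 ≤ r * (n * q) := by positivity
      linarith
    have hchoose : (n.choose r : ℝ) * (r : ℝ) ^ r ≤ Real.exp r * n ^ r := by
      have := choose_mul_pow_le_exp (n := n) (by exact_mod_cast hnpos) r
      rwa [div_pow, ← mul_div_assoc, div_le_iff₀ (by positivity)] at this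
    calc _ ≤ (n.choose r : ℝ) * (((r : ℝ) ^ r * q ^ (r - 1)) *
          (16 ^ ℓ * Real.exp (-(r * (L / 40))))) := by
          gcongr
          exact min_le_right _ _
      _ = 16 ^ ℓ * (((n.choose r : ℝ) * (r : ℝ) ^ r * q ^ (r - 1)) *
          Real.exp (-(r * (L / 40)))) := by ring
      _ ≤ 16 ^ ℓ * (Real.exp r * (n * (2 * L) ^ r) * Real.exp (-(r * (L / 40)))) := by
          have h1 := pow_mul_pow_pred_le (r := r) (by omega) hL hq0 hq2
          have h2 : (n.choose r : ℝ) * (r : ℝ) ^ r * q ^ (r - 1) ≤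
              Real.exp r * (n * (2 * L) ^ r) := by
            calc _ ≤ Real.exp r * n ^ r * q ^ (r - 1) := by gcongr
              _ = Real.exp r * (n ^ r * q ^ (r - 1)) := by ring
              _ ≤ _ := by gcongr
          gcongr
      _ = 16 ^ ℓ * Real.exp (L + r * (1 + Real.log (2 * L) - L / 40)) := by
          have : (2 * L) ^ r = Real.exp (r * Real.log (2 * L)) := by
            rw [Real.exp_nat_mul, Real.exp_log (by positivity)]
          rw [this, hn, ← Real.exp_add, ← Real.exp_add, ← Real.exp_add]
          congr 2; ring
      _ ≤ _ := by
          gcongr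
          nlinarith
  · rw [min_eq_right hx] at hb
    have hb15 : missBound q r ≤ 1 / 15 := by
      have h1 := Real.exp_one_gt_d9
      have h2 : (15 : ℝ) ≤ Real.exp 3 := by
        rw [show (3 : ℝ) = (3 : ℕ) * 1 by norm_num, Real.exp_nat_mul]
        calc (15 : ℝ) ≤ 2.7 ^ 3 := by norm_num
          _ ≤ _ := by gcongr; linarith
      rw [hb, Real.exp_neg, ← one_div]
      exact one_div_le_one_div_of_le (by norm_num) h2
    have hlog2 := Real.log_two_gt_d9
    have hchoose : (n.choose r : ℝ) ≤ Real.exp (n * Real.log 2) := by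
      rw [Real.exp_nat_mul, Real.exp_log (by norm_num)]
      exact_mod_cast Nat.choose_le_two_pow n r
    have hmix : (16⁻¹ + (1 - 16⁻¹) * missBound q r) ^ (n - r) ≤
        Real.exp (-(3 / 2 * n * Real.log 2)) := by
      calc _ ≤ Real.exp (-(3 * Real.log 2)) ^ (n - r) := by
            refine pow_le_pow_left₀ (by positivity) ?_ _
            have : Real.exp (-(3 * Real.log 2)) = 1 / 8 := by
              rw [Real.exp_neg, show (3 : ℝ) = (3 : ℕ) by norm_num, Real.exp_nat_mul,
                Real.exp_log (by norm_num)]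
              norm_num
            rw [this]
            linarith
        _ ≤ _ := by
            rw [← Real.exp_nat_mul, Real.exp_le_exp]
            nlinarith
    calc _ ≤ Real.exp (n * Real.log 2) * (1 * (16 ^ ℓ * Real.exp (-(3 / 2 * n * Real.log 2)))) := by
          gcongr
          exact min_le_left _ _
      _ = 16 ^ ℓ * Real.exp (-(n * Real.log 2 / 2)) := by
          rw [one_mul, mul_left_comm, ← Real.exp_add]
          congr 2; ring
      _ ≤ _ := by
          gcongr
          nlinarith

/-- The union bound over all set sizes. -/
lemma sum_sizeTerm_le {n ℓ : ℕ} {q L : ℝ} (hL : 1 ≤ L) (hn : (n : ℝ) = Real.exp L)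
    (hn3 : 3000 ≤ n) (hq0 : 0 ≤ q) (hq : q ≤ 1) (hq1 : L ≤ n * q) (hq2 : n * q ≤ 2 * L)
    (hnL : 72 * L ≤ n) (hlog : 1 + Real.log (2 * L) ≤ L / 80) :
    (∑ r ∈ Finset.range (n + 1), if 1 ≤ r ∧ 2 * r ≤ n then
      sizeTerm n ℓ q (if r = 1 then L⁻¹ else 16⁻¹) (missBound q r) r else 0) ≤
    Real.exp (3 - (n * q - L - ℓ * Real.log L)) +
      300 * (16 ^ ℓ * (300 ^ 300 * ((2 * L) ^ 300 * Real.exp (-(2 / 5 * L))))) +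
      2 * (16 ^ ℓ * Real.exp (-L)) := by
  set E₁ := Real.exp (3 - (n * q - L - ℓ * Real.log L)) with hE₁
  set E₂ := 16 ^ ℓ * (300 ^ 300 * ((2 * L) ^ 300 * Real.exp (-(2 / 5 * L)))) with hE₂
  have hE₁0 : 0 ≤ E₁ := by positivity
  have hE₂0 : 0 ≤ E₂ := by positivity
  calc _ ≤ ∑ r ∈ Finset.range (n + 1), ((if r = 1 then E₁ else 0) + (if r < 300 then E₂ else 0) +
        16 ^ ℓ * Real.exp (-(2 * L))) := by
        refine Finset.sum_le_sum fun r _ => ?_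
        have h3 : 0 ≤ 16 ^ ℓ * Real.exp (-(2 * L)) := by positivity
        split_ifs with h1 h2 h4 h5 <;> try linarith
        · subst h2
          linarith [sizeTerm_one_le (ℓ := ℓ) hL hn (by omega) hq0 hq hq2]
        · linarith [sizeTerm_le_of_lt (ℓ := ℓ) hL hn hn3 (by omega) h5 hq0 hq1 hq2 hnL]
        · linarith [sizeTerm_le_of_ge (ℓ := ℓ) hL hn (by omega) h1.2 hq0 hq1 hq2 hnL hlog]
    _ ≤ _ := by
        rw [Finset.sum_add_distrib, Finset.sum_add_distrib, Finset.sum_ite_eq',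
          if_pos (by simp; omega), Finset.sum_const, Finset.card_range, nsmul_eq_mul,
          ← Finset.sum_filter, Finset.sum_const, nsmul_eq_mul]
        have h1 : ((Finset.range (n + 1)).filter (· < 300)).card ≤ 300 := by
          refine (Finset.card_le_card (t := Finset.range 300) fun r hr => ?_).trans (by simp)
          simpa using (Finset.mem_filter.1 hr).2
        have h1' : (((Finset.range (n + 1)).filter (· < 300)).card : ℝ) ≤ 300 := by
          exact_mod_cast h1
        have h2 : ((n + 1 : ℕ) : ℝ) * (16 ^ ℓ * Real.exp (-(2 * L))) ≤
            2 * (16 ^ ℓ * Real.exp (-L)) := by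
          have h3 : ((n + 1 : ℕ) : ℝ) ≤ 2 * Real.exp L := by
            rw [← hn]; push_cast
            have : (3000 : ℝ) ≤ n := by exact_mod_cast hn3
            linarith
          calc _ ≤ 2 * Real.exp L * (16 ^ ℓ * Real.exp (-(2 * L))) := by gcongr
            _ = 2 * (16 ^ ℓ * (Real.exp L * Real.exp (-(2 * L)))) := by ring
            _ = _ := by rw [← Real.exp_add]; congr 4; ring
        gcongr

end TermBounds

section Assembly

open scoped Classical in
lemma gonMeasure_vertexConn_le {n ℓ K P s : ℕ} {p c L : ℝ} (hℓ : ℓ < n) (h : K ≤ P) (hp0 : 0 ≤ p)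
    (hp1 : p ≤ 1) (hc : 0 < c) (hcn : c * n ≤ P) (hK : 20 ≤ K)
    (hKc : 2 * (1 - Real.log c) ≤ K) (hs : 300 ≤ s) (hsP : (s : ℝ) * K ≤ Real.exp (-60) * P)
    (hs3 : 3 ≤ 9 / 20 * psf K P * s) (hL : 1 ≤ L) (hn : (n : ℝ) = Real.exp L) (hn3 : 3000 ≤ n)
    (hq1 : L ≤ n * pef K P p) (hq2 : n * pef K P p ≤ 2 * L)
    (hnL : 72 * L ≤ n) (hlog : 1 + Real.log (2 * L) ≤ L / 80) :
    gonMeasure n K P p {ω | vertexConn (gonGraph ω) = ℓ} ≤ ENNReal.ofReal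
      (2 * Real.exp (-(K / 2)) + (Real.exp (3 - (n * pef K P p - L - ℓ * Real.log L)) +
      300 * (16 ^ ℓ * (300 ^ 300 * ((2 * L) ^ 300 * Real.exp (-(2 / 5 * L))))) +
      2 * (16 ^ ℓ * Real.exp (-L)))) := by
  have hq0 : 0 ≤ pef K P p := mul_nonneg hp0 (psf_nonneg h)
  have hq : pef K P p ≤ 1 := mul_le_one₀ hp1 (psf_nonneg h) (psf_le_one h)
  rw [gonMeasure_eq h hp0 hp1]
  refine ENNReal.ofReal_le_ofReal ?_
  have hL1 : L⁻¹ ≤ 1 := inv_le_one_of_one_le₀ hL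
  have hL0 : 0 < L⁻¹ := by positivity
  simp only [Set.mem_ofPred_eq]
  refine le_trans (le_of_eq (by congr!)) ((gonEx_vertexConn_le hℓ h hp0 hp1 (fun r => if r = 1 then L⁻¹ else 16⁻¹)
    (missBound (pef K P p)) (fun r => ?_) (fun r => ?_) (missBound_nonneg hq)).trans ?_)
  · split_ifs
    · exact hL0
    · norm_num
  · split_ifs
    · exact hL1
    · norm_num
  refine add_le_add ?_ (sum_sizeTerm_le hL hn hn3 hq0 hq hq1 hq2 hnL hlog)
  refine le_trans (prodEx_mono (ringWeight_nonneg P K) fun k => ?_)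
    (prodEx_small_keyUnion_le (n := n) h hc hcn hK hKc (by omega) hsP)
  split_ifs with h1 h2
  · exact le_rfl
  · exfalso
    obtain ⟨T, hT, -, hmiss⟩ := h1
    refine hmiss (freshMissLe_missBound h (by omega) hp0 hp1 k hs hs3 (fun W hW1 hW2 => ?_) T hT)
    by_contra hcon
    exact h2 ⟨W, hW1, hW2, not_le.1 hcon⟩
  · exact zero_le_one
  · exact le_rfl

lemma eventually_log_bounds (ℓ : ℕ) : ∀ᶠ x : ℝ in atTop,
    1 ≤ x ∧ ℓ * Real.log x ≤ x / 2 ∧ 1 + Real.log (2 * x) ≤ x / 80 := by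
  have h1 := Real.isLittleO_log_id_atTop.def (c := 1 / (2 * (ℓ + 1))) (by positivity)
  have h2 := Real.isLittleO_log_id_atTop.def (c := 1 / 160) (by positivity)
  filter_upwards [h1, h2, eventually_ge_atTop 1000] with x hx1 hx2 hx
  have hlog : 0 ≤ Real.log x := Real.log_nonneg (by linarith)
  simp only [id, Real.norm_eq_abs, abs_of_nonneg hlog, abs_of_pos (show 0 < x by linarith)]
    at hx1 hx2
  refine ⟨by linarith, ?_, ?_⟩
  · calc ℓ * Real.log x ≤ (ℓ + 1) * Real.log x := by gcongr; linarith
      _ ≤ (ℓ + 1) * (1 / (2 * (ℓ + 1)) * x) := by gcongr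
      _ = x / 2 := by field_simp
  · rw [Real.log_mul (by norm_num) (by linarith)]
    have := Real.log_two_lt_d9
    linarith

lemma tendsto_error_bound (ℓ : ℕ) {β L K : ℕ → ℝ} (hβ : Tendsto β atTop atTop)
    (hL : Tendsto L atTop atTop) (hK : Tendsto K atTop atTop) :
    Tendsto (fun n => 2 * Real.exp (-(K n / 2)) + (Real.exp (3 - β n) +
      300 * (16 ^ ℓ * (300 ^ 300 * ((2 * L n) ^ 300 * Real.exp (-(2 / 5 * L n))))) +
      2 * (16 ^ ℓ * Real.exp (-L n)))) atTop (nhds 0) := by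
  have hexp : ∀ {f : ℕ → ℝ}, Tendsto f atTop atTop →
      Tendsto (fun n => Real.exp (-f n)) atTop (nhds 0) := fun hf =>
    Real.tendsto_exp_neg_atTop_nhds_zero.comp hf
  have h1 : Tendsto (fun n => 2 * Real.exp (-(K n / 2))) atTop (nhds 0) := by
    simpa using (hexp (hK.atTop_div_const (by norm_num : (0 : ℝ) < 2))).const_mul 2
  have h2 : Tendsto (fun n => Real.exp (3 - β n)) atTop (nhds 0) := by
    have : Tendsto (fun n => β n - 3) atTop atTop :=
      tendsto_atTop_add_const_right _ (-3) hβ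
    simpa using hexp this
  have h3 : Tendsto (fun n => (2 * L n) ^ 300 * Real.exp (-(2 / 5 * L n))) atTop (nhds 0) := by
    have h := (Real.tendsto_pow_mul_exp_neg_atTop_nhds_zero 300).comp
      (hL.const_mul_atTop (by norm_num : (0 : ℝ) < 2 / 5))
    have h' := h.const_mul ((5 : ℝ) ^ 300)
    rw [mul_zero] at h'
    refine h'.congr fun n => ?_
    simp only [Function.comp]
    rw [← mul_assoc, ← mul_pow]
    congr 2; ring
  have h4 := hexp hL
  have h5 := ((h3.const_mul (300 ^ 300)).const_mul (16 ^ ℓ)).const_mul 300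
  have h6 := (h4.const_mul (16 ^ ℓ)).const_mul 2
  simp only [mul_zero] at h5 h6
  have := h1.add ((h2.add h5).add h6)
  simpa only [add_zero] using this

end Assembly

/-- the vertex connectivity of `𝔾_on` is not `ℓ`,
asymptotically. -/
theorem gon_connectivity_ne_ell
    (ℓ : ℕ) (K P : ℕ → ℕ) (p : ℕ → ℝ)
    (hKP : ∀ n, K n ≤ P n) (hp0 : ∀ n, 0 < p n) (hp1 : ∀ n, p n < 1)
    (hK2 : ∀ᶠ n : ℕ in atTop, 2 ≤ K n)
    (hP : ∃ c : ℝ, 0 < c ∧ ∀ᶠ n : ℕ in atTop, c * (n : ℝ) ≤ (P n : ℝ))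
    (hKPo : Tendsto (fun n : ℕ => (K n : ℝ) / (P n : ℝ)) atTop (nhds 0))
    (β : ℕ → ℝ)
    (hβ : ∀ n : ℕ, β n =
      (n : ℝ) * pef (K n) (P n) (p n) - Real.log n - (ℓ : ℝ) * Real.log (Real.log n))
    (hβo : Tendsto (fun n : ℕ => β n / Real.log n) atTop (nhds 0))
    (hβtop : Tendsto β atTop atTop) :
    Tendsto (fun n : ℕ => gonMeasure n (K n) (P n) (p n)
        {ω | vertexConn (gonGraph ω) = ℓ}) atTop (nhds 0) := by
  obtain ⟨c, hc, hcP⟩ := hP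
  have hLtop : Tendsto (fun n : ℕ => Real.log n) atTop atTop :=
    Real.tendsto_log_atTop.comp tendsto_natCast_atTop_atTop
  have hLb := hLtop.eventually (eventually_log_bounds ℓ)
  have hedge : ∀ᶠ n : ℕ in atTop, Real.log n ≤ n * pef (K n) (P n) (p n) ∧
      n * pef (K n) (P n) (p n) ≤ 2 * Real.log n := by
    filter_upwards [hLb, hβtop.eventually_ge_atTop 0,
      hβo.eventually_le_const (show (0 : ℝ) < 1 / 2 by norm_num)] with n h1 h2 h3
    have hL : 0 < Real.log n := by linarith [h1.1]
    rw [div_le_iff₀ hL] at h3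
    have h4 : 0 ≤ ℓ * Real.log (Real.log n) :=
      mul_nonneg (Nat.cast_nonneg _) (Real.log_nonneg h1.1)
    have h5 := hβ n
    constructor
    · linarith
    · linarith [h1.2.1]
  have hKtop : Tendsto (fun n => (K n : ℝ)) atTop atTop := by
    rw [tendsto_atTop]
    intro M
    filter_upwards [hedge, hcP, hK2, eventually_gt_atTop 0,
      hLtop.eventually_ge_atTop (M ^ 2 / c)] with n h1 h2 h3 h4 h5
    have hn : (0 : ℝ) < n := by exact_mod_cast h4
    have hPpos : (0 : ℝ) < P n := lt_of_lt_of_le (by positivity) h2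
    have hps := psf_le (hKP n) (by omega)
    rw [le_div_iff₀ hPpos] at hps
    have hps0 := psf_nonneg (hKP n)
    have h6 : pef (K n) (P n) (p n) ≤ psf (K n) (P n) :=
      mul_le_of_le_one_left hps0 (hp1 n).le
    rw [div_le_iff₀ hc] at h5
    have h7 : Real.log n ≤ n * psf (K n) (P n) := h1.1.trans (by gcongr)
    have h8 : M ^ 2 ≤ (K n : ℝ) ^ 2 := by
      calc M ^ 2 ≤ Real.log n * c := h5
        _ ≤ n * psf (K n) (P n) * c := by gcongr
        _ = psf (K n) (P n) * (c * n) := by ring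
        _ ≤ psf (K n) (P n) * P n := by gcongr
        _ ≤ _ := hps
    exact (le_abs_self M).trans (abs_le_of_sq_le_sq' h8 (Nat.cast_nonneg _) |> abs_le.2)
  have hPK : Tendsto (fun n => (P n : ℝ) / K n) atTop atTop := by
    have : Tendsto (fun n : ℕ => (K n : ℝ) / (P n : ℝ)) atTop (nhdsWithin 0 (Set.Ioi 0)) := by
      refine tendsto_nhdsWithin_iff.2 ⟨hKPo, ?_⟩
      filter_upwards [hK2] with n hn
      have h1 : 0 < K n := by omega
      have h2 : 0 < P n := h1.trans_le (hKP n)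
      show (0 : ℝ) < K n / P n
      exact div_pos (Nat.cast_pos.2 h1) (Nat.cast_pos.2 h2)
    refine this.inv_tendsto_nhdsGT_zero.congr fun n => ?_
    simp
  have hbound := ENNReal.tendsto_ofReal (tendsto_error_bound ℓ hβtop hLtop hKtop)
  rw [ENNReal.ofReal_zero] at hbound
  refine tendsto_of_tendsto_of_tendsto_of_le_of_le' tendsto_const_nhds hbound
    (Eventually.of_forall fun _ => zero_le) ?_
  have hnL : ∀ᶠ n : ℕ in atTop, 72 * Real.log n ≤ n := by
    filter_upwards [tendsto_natCast_atTop_atTop.eventually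
      (Real.isLittleO_log_id_atTop.def (c := 1 / 72) (by positivity)),
      hLtop.eventually_ge_atTop 0] with n h1 h2
    simp only [id, Real.norm_eq_abs, abs_of_nonneg h2, Nat.abs_cast] at h1
    linarith
  filter_upwards [hLb, hedge, hcP, hnL, hK2, eventually_gt_atTop ℓ, eventually_ge_atTop 3000,
    hKtop.eventually_ge_atTop (max 20 (max (2 * (1 - Real.log c)) (40 * Real.exp 60))),
    hPK.eventually_ge_atTop (301 * Real.exp 60)] with n h1 h2 h3 h4 h5 h6 h7 h8 h9
  obtain ⟨h8a, h8b⟩ := max_le_iff.1 h8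
  obtain ⟨h8b, h8c⟩ := max_le_iff.1 h8b
  have hKpos : (0 : ℝ) < K n := by linarith
  have hKpos' : 0 < K n := by omega
  have hPpos : 0 < P n := hKpos'.trans_le (hKP n)
  have hPpos' : (0 : ℝ) < P n := by exact_mod_cast hPpos
  have hn : (n : ℝ) = Real.exp (Real.log n) :=
    (Real.exp_log (by exact_mod_cast (by omega : 0 < n))).symm
  have hee : Real.exp (-60) * Real.exp 60 = 1 := by rw [← Real.exp_add]; simp
  set x : ℝ := Real.exp (-60) * (P n / K n) with hx
  have hx301 : 301 ≤ x := by
    calc (301 : ℝ) = Real.exp (-60) * (301 * Real.exp 60) := by linear_combination -301 * hee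
      _ ≤ x := by rw [hx]; gcongr
  have hs1 : (⌊x⌋₊ : ℝ) ≤ x := Nat.floor_le (by linarith)
  have hs2 : x < ⌊x⌋₊ + 1 := Nat.lt_floor_add_one x
  have hs300 : 300 ≤ ⌊x⌋₊ := Nat.le_floor (by push_cast; linarith)
  have hpsf : 20 / 3 ≤ psf (K n) (P n) * ⌊x⌋₊ := by
    have hle := le_psf (hKP n) hPpos
    have hfl : x / 2 ≤ ⌊x⌋₊ := by linarith
    have h10 : min ((K n : ℝ) ^ 2 / P n) 1 / 2 * (x / 2) ≤ psf (K n) (P n) * ⌊x⌋₊ :=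
      mul_le_mul hle hfl (by linarith) (psf_nonneg (hKP n))
    refine le_trans ?_ h10
    rcases le_total ((K n : ℝ) ^ 2 / P n) 1 with hmin | hmin
    · rw [min_eq_left hmin]
      have h11 : (K n : ℝ) ^ 2 / P n / 2 * (x / 2) = Real.exp (-60) * K n / 4 := by
        rw [hx]; field_simp; norm_num
      rw [h11]
      have h12 : 40 ≤ Real.exp (-60) * K n := by
        calc (40 : ℝ) = Real.exp (-60) * (40 * Real.exp 60) := by linear_combination -40 * hee
          _ ≤ _ := by gcongr
      linarith
    · rw [min_eq_right hmin]
      linarith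
  have hmain := gonMeasure_vertexConn_le (ℓ := ℓ) (s := ⌊x⌋₊) h6 (hKP n) (hp0 n).le (hp1 n).le hc h3
    (by exact_mod_cast h8a) h8b hs300
    (by
      calc (⌊x⌋₊ : ℝ) * K n ≤ x * K n := by gcongr
        _ = Real.exp (-60) * P n := by rw [hx]; field_simp)
    (by linarith) h1.1 hn h7 h2.1 h2.2 h4 h1.2.2
  rwa [← hβ n] at hmain
end
end

section
/- Let ℓ be a fixed nonnegative integer. If P_n = Ω(n) and p_e = (ln n + ℓ·ln ln n + β_{ℓ,n})/n with β_{ℓ,n} > 0 for all n, then K_n = Ω(√(ln n)). -/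
open MeasureTheory Filter Asymptotics
open scoped ENNReal

noncomputable section

/-- Pascal's rule iterated `j` times, with each increment bounded by the largest one. -/
theorem choose_succ_le_choose_sub_add (N k j : ℕ) (hj : j ≤ N + 1) :
    (N + 1).choose (k + 1) ≤ (N + 1 - j).choose (k + 1) + j * N.choose k := by
  induction j with
  | zero => simp
  | succ j ih =>
    have pascal : (N + 1 - j).choose (k + 1) =
        (N - j).choose k + (N - j).choose (k + 1) := by
      rw [show N + 1 - j = (N - j) + 1 by omega, Nat.choose_succ_succ]
    have mono : (N - j).choose k ≤ N.choose k := Nat.choose_le_choose k (Nat.sub_le N j)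
    have step := ih (by omega)
    rw [show N + 1 - (j + 1) = N - j by omega, Nat.succ_mul]
    omega

theorem psf_mul_le_sq {K P : ℕ} (hKP : K ≤ P) : psf K P * P ≤ (K : ℝ) ^ 2 := by
  unfold psf
  split_ifs with h
  · obtain _ | k := K
    · simp
    obtain ⟨N, rfl⟩ : ∃ N, P = N + 1 := ⟨P - 1, by omega⟩
    have hpos : (0 : ℝ) < (N + 1).choose (k + 1) := by
      exact_mod_cast Nat.choose_pos hKP
    have union_bound : ((N + 1).choose (k + 1) : ℝ) ≤
        (N + 1 - (k + 1)).choose (k + 1) + (k + 1 : ℕ) * N.choose k := by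
      exact_mod_cast choose_succ_le_choose_sub_add N k (k + 1) hKP
    have absorb : ((N + 1 : ℕ) : ℝ) * N.choose k = (N + 1).choose (k + 1) * (k + 1 : ℕ) := by
      exact_mod_cast Nat.add_one_mul_choose_eq N k
    have hN : (0 : ℝ) ≤ (N + 1 : ℕ) := Nat.cast_nonneg _
    rw [one_sub_div hpos.ne', div_mul_eq_mul_div, div_le_iff₀ hpos]
    calc _ ≤ ((k + 1 : ℕ) * N.choose k : ℝ) * (N + 1 : ℕ) := by
          gcongr
          linarith
      _ = (k + 1 : ℕ) * (((N + 1 : ℕ) : ℝ) * N.choose k) := by ring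
      _ = _ := by rw [absorb]; ring
  · have hP : P ≤ K ^ 2 := by
      obtain rfl | hK : K = 1 ∨ 2 ≤ K := by omega
      · omega
      · nlinarith
    rw [one_mul]
    exact_mod_cast hP

/-- `K_n = Ω(√(ln n))` under the critical scaling. -/
theorem gon_key_ring_size_lower_bound
    (ℓ : ℕ) (K P : ℕ → ℕ) (p : ℕ → ℝ)
    (hKP : ∀ n, K n ≤ P n) (hp0 : ∀ n, 0 < p n) (hp1 : ∀ n, p n < 1)
    (hP : ∃ c : ℝ, 0 < c ∧ ∀ᶠ n : ℕ in atTop, c * (n : ℝ) ≤ (P n : ℝ))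
    (hβ : ∀ᶠ n : ℕ in atTop,
      0 < (n : ℝ) * pef (K n) (P n) (p n) - Real.log n -
        (ℓ : ℝ) * Real.log (Real.log n)) :
    ∃ c : ℝ, 0 < c ∧ ∀ᶠ n : ℕ in atTop, c * Real.sqrt (Real.log n) ≤ (K n : ℝ) := by
  obtain ⟨c, hc, hP⟩ := hP
  refine ⟨√c, Real.sqrt_pos.2 hc, ?_⟩
  have hloglog : ∀ᶠ n : ℕ in atTop, 0 ≤ Real.log (Real.log n) :=
    (Real.tendsto_log_atTop.comp
      (Real.tendsto_log_atTop.comp tendsto_natCast_atTop_atTop)).eventually_ge_atTop 0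
  filter_upwards [hP, hβ, hloglog, eventually_gt_atTop 0] with n hPn hβn hlog hn
  have hn0 : (0 : ℝ) < n := by exact_mod_cast hn
  have hℓ : 0 ≤ (ℓ : ℝ) * Real.log (Real.log n) := by positivity
  have hP0 : (0 : ℝ) < P n := (mul_pos hc hn0).trans_le hPn
  have hps : psf (K n) (P n) ≤ (K n : ℝ) ^ 2 / P n :=
    (le_div_iff₀ hP0).2 (psf_mul_le_sq (hKP n))
  have hpe : pef (K n) (P n) (p n) ≤ (K n : ℝ) ^ 2 / (c * n) := by
    calc pef (K n) (P n) (p n) ≤ p n * ((K n : ℝ) ^ 2 / P n) :=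
          mul_le_mul_of_nonneg_left hps (hp0 n).le
      _ ≤ (K n : ℝ) ^ 2 / P n := mul_le_of_le_one_left (by positivity) (hp1 n).le
      _ ≤ _ := by gcongr
  have key : c * Real.log n ≤ (K n : ℝ) ^ 2 := by
    have hmul : pef (K n) (P n) (p n) * (c * n) ≤ (K n : ℝ) ^ 2 :=
      (le_div_iff₀ (mul_pos hc hn0)).1 hpe
    nlinarith
  rw [← Real.sqrt_mul hc.le]
  exact Real.sqrt_le_iff.2 ⟨Nat.cast_nonneg _, key⟩
end
end
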